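/- arXiv:1312.0655 — 2 statements merged into one kernel-verified Lean document; each statement's English description precedes it below -/
import Mathlib

section
/- Let ε > 0, Δ > 0, and let μ be a probability measure on ℝ² satisfying the ε-differential-privacy constraint with V(μ) = ∫_{ℝ²} ‖x‖₁ dμ(x) < +∞. For each positive integer i, let μ_i be the probability measure on ℝ² whose density with respect to Lebesgue measure is f_i(x) = μ(A_i(k)) / Vol(A_i(k)) for x ∈ A_i(k), k ∈ ℕ, where Vol denotes Lebesgue measure. Then each μ_i satisfies the ε-differential-privacy constraint, and lim_{i→∞} V(μ_i) = V(μ). (Lemma 1 for d = 2.) -/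
open MeasureTheory Real Filter
open scoped ENNReal Topology

noncomputable section

/-- The ℓ¹ norm on ℝ². -/
def l1 (x : ℝ × ℝ) : ℝ := |x.1| + |x.2|

/-- The ε-differential-privacy constraint on a measure on ℝ² with sensitivity Δ. -/
def DPC (ε Δ : ℝ) (μ : Measure (ℝ × ℝ)) : Prop :=
  ∀ S : Set (ℝ × ℝ), MeasurableSet S → ∀ t : ℝ × ℝ, l1 t ≤ Δ →
    μ S ≤ ENNReal.ofReal (Real.exp ε) * μ ((· + t) '' S)

/-- Expected ℓ¹ cost of a noise distribution. -/
def cost (μ : Measure (ℝ × ℝ)) : ℝ≥0∞ := ∫⁻ x, ENNReal.ofReal (l1 x) ∂μ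

/-- The ℓ¹ layer A_i(k) = {x ∈ ℝ² : kΔ/i ≤ ‖x‖₁ < (k+1)Δ/i}. -/
def Aset (Δ : ℝ) (i k : ℕ) : Set (ℝ × ℝ) :=
  {x | (k : ℝ) * Δ / i ≤ l1 x ∧ l1 x < ((k : ℝ) + 1) * Δ / i}

/-- The index k such that x ∈ A_i(k). -/
def layerIdx (Δ : ℝ) (i : ℕ) (x : ℝ × ℝ) : ℕ := ⌊l1 x * i / Δ⌋₊

/-- The approximating measure μ_i, whose density w.r.t. Lebesgue measure equals
μ(A_i(k)) / Vol(A_i(k)) on each layer A_i(k). -/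
def approxMeasure (Δ : ℝ) (μ : Measure (ℝ × ℝ)) (i : ℕ) : Measure (ℝ × ℝ) :=
  MeasureTheory.volume.withDensity
    (fun x => μ (Aset Δ i (layerIdx Δ i x)) /
      MeasureTheory.volume (Aset Δ i (layerIdx Δ i x)))

/-!
In polar coordinates adapted to the norm, the averages of the density of `μ` over two layers can be
compared ray by ray. On a ray the averages over the `k`-th and the `m`-th layer of width `w` carry
weights proportional to `(k * w + σ) ^ (d - 1)` and `(m * w + σ) ^ (d - 1)` for `σ ∈ [0, w)`. If
`k < m`, the second normalised weight is more concentrated near `σ = 0`, because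
`(k * w + σ) / (m * w + σ)` is increasing in `σ`. So the two weights can be coupled with
`σ' ≤ σ ≤ σ' + w`, which keeps the coupled points `k * w + σ` and `m * w + σ'` within distance
`(m - k) * w` of each other; the privacy constraint at that distance then passes to the averages.
Moving mass inside layers of width `w` changes the expected norm by at most `w` times the total
mass.
-/

open scoped NNReal

section Coupling

variable {α : Type*} [MeasurableSpace α] {ν : Measure α} {p q : α → ℝ≥0∞}

theorem lintegral_tsub_comm (hp : Measurable p) (hq : Measurable q)
    (hpq : ∫⁻ x, p x ∂ν = ∫⁻ x, q x ∂ν) (hfin : ∫⁻ x, q x ∂ν ≠ ∞) :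
    ∫⁻ x, (p x - q x) ∂ν = ∫⁻ x, (q x - p x) ∂ν := by
  have hmin : ∫⁻ x, min (p x) (q x) ∂ν ≠ ∞ :=
    ((lintegral_mono fun x => min_le_right _ _).trans_lt hfin.lt_top).ne
  refine (ENNReal.add_left_inj hmin).1 ?_
  rw [← lintegral_add_right _ (hp.min hq), ← lintegral_add_right _ (hp.min hq)]
  simp_rw [tsub_add_min, min_comm (p _) (q _), tsub_add_min, hpq]

/- This is a coupling of the two densities: the common part `min p q` stays in place, and the excess
of `p` is matched with the excess of `q`. -/
theorem setLIntegral_mul_le_of_excess {s : Set α} (hs : MeasurableSet s) (hp : Measurable p)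
    (hq : Measurable q) (hpq : ∫⁻ x in s, p x ∂ν = ∫⁻ x in s, q x ∂ν)
    (hfin : ∫⁻ x in s, q x ∂ν ≠ ∞) {F G : α → ℝ≥0∞} (hdiag : ∀ x ∈ s, F x ≤ G x)
    (hcross : ∀ x ∈ s, ∀ y ∈ s, q x < p x → p y < q y → F x ≤ G y) :
    ∫⁻ x in s, p x * F x ∂ν ≤ ∫⁻ x in s, q x * G x ∂ν := by
  have hexcess : ∫⁻ x in s, (p x - q x) ∂ν = ∫⁻ x in s, (q x - p x) ∂ν :=
    lintegral_tsub_comm hp hq hpq hfin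
  have hpq_meas : Measurable fun x => p x - q x := hp.sub hq
  have hqp_meas : Measurable fun x => q x - p x := hq.sub hp
  set B : ℝ≥0∞ := ⨅ y ∈ {y ∈ s | p y < q y}, G y
  have hFB (x) (hx : x ∈ s) : (p x - q x) * F x ≤ (p x - q x) * B := by
    rcases le_or_gt (p x) (q x) with h | h
    · simp only [tsub_eq_zero_of_le h, zero_mul, le_refl]
    · exact mul_le_mul_right (le_iInf₂ fun y hy => hcross x hx y hy.1 h hy.2) _
  have hBG (x) (hx : x ∈ s) : (q x - p x) * B ≤ (q x - p x) * G x := by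
    rcases le_or_gt (q x) (p x) with h | h
    · simp only [tsub_eq_zero_of_le h, zero_mul, le_refl]
    · exact mul_le_mul_right (iInf₂_le x ⟨hx, h⟩) _
  calc ∫⁻ x in s, p x * F x ∂ν
      ≤ ∫⁻ x in s, ((p x - q x) * B + min (p x) (q x) * G x) ∂ν := by
        refine setLIntegral_mono' hs fun x hx => ?_
        calc p x * F x = (p x - q x) * F x + min (p x) (q x) * F x := by
              rw [← add_mul, tsub_add_min]
          _ ≤ _ := add_le_add (hFB x hx) (mul_le_mul_right (hdiag x hx) _)
    _ = ∫⁻ x in s, ((q x - p x) * B + min (p x) (q x) * G x) ∂ν := by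
        rw [lintegral_add_left (hpq_meas.mul_const B), lintegral_mul_const _ hpq_meas,
          lintegral_add_left (hqp_meas.mul_const B), lintegral_mul_const _ hqp_meas, hexcess]
    _ ≤ ∫⁻ x in s, q x * G x ∂ν := by
        refine setLIntegral_mono' hs fun x hx => ?_
        calc (q x - p x) * B + min (p x) (q x) * G x
            ≤ (q x - p x) * G x + min (p x) (q x) * G x := add_le_add_left (hBG x hx) _
          _ = q x * G x := by rw [← add_mul, min_comm, tsub_add_min]

end Coupling

section Radial

variable {a b w σ τ : ℝ}

theorem sub_mul_sub_pos_of_weighted_pow_lt (ha : 0 ≤ a) (hb : 0 ≤ b)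
    (hσ : 0 ≤ σ) (hτ : 0 ≤ τ) {n : ℕ} {A B : ℝ≥0∞}
    (h₁ : A * ENNReal.ofReal ((b + σ) ^ n) < B * ENNReal.ofReal ((a + σ) ^ n))
    (h₂ : B * ENNReal.ofReal ((a + τ) ^ n) < A * ENNReal.ofReal ((b + τ) ^ n)) :
    0 < (b - a) * (σ - τ) := by
  by_contra! h
  have hpow : ENNReal.ofReal ((a + σ) ^ n) * ENNReal.ofReal ((b + τ) ^ n) ≤
      ENNReal.ofReal ((b + σ) ^ n) * ENNReal.ofReal ((a + τ) ^ n) := by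
    rw [← ENNReal.ofReal_mul (by positivity), ← ENNReal.ofReal_mul (by positivity), ← mul_pow,
      ← mul_pow]
    exact ENNReal.ofReal_le_ofReal (pow_le_pow_left₀ (by positivity) (by linarith) n)
  refine (ENNReal.mul_lt_mul h₁ h₂).not_ge ?_
  calc B * ENNReal.ofReal ((a + σ) ^ n) * (A * ENNReal.ofReal ((b + τ) ^ n))
      = B * A * (ENNReal.ofReal ((a + σ) ^ n) * ENNReal.ofReal ((b + τ) ^ n)) := by ring
    _ ≤ B * A * (ENNReal.ofReal ((b + σ) ^ n) * ENNReal.ofReal ((a + τ) ^ n)) := by gcongr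
    _ = _ := by ring

theorem abs_add_sub_add_le (hab : a = b ∨ w ≤ |b - a|) (hστ : |σ - τ| ≤ w)
    (hsign : 0 < (b - a) * (σ - τ)) : |(b + τ) - (a + σ)| ≤ |b - a| := by
  have hw : |σ - τ| ≤ |b - a| := by
    rcases hab with rfl | hab
    · simp at hsign
    · exact hστ.trans hab
  rcases pos_and_pos_or_neg_and_neg_of_mul_pos hsign with ⟨h₁, h₂⟩ | ⟨h₁, h₂⟩
  · rw [abs_of_pos h₁, abs_of_pos h₂] at hw
    rw [abs_of_pos h₁, abs_le]
    constructor <;> linarith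
  · rw [abs_of_neg h₁, abs_of_neg h₂] at hw
    rw [abs_of_neg h₁, abs_le]
    constructor <;> linarith

theorem setLIntegral_Ico_add_right (f : ℝ → ℝ≥0∞) :
    ∫⁻ r in Set.Ico a (a + w), f r = ∫⁻ σ in Set.Ico 0 w, f (a + σ) := by
  rw [(measurePreserving_add_left volume a).setLIntegral_comp_emb
    (MeasurableEquiv.addLeft a).measurableEmbedding, Set.image_const_add_Ico, add_zero]

theorem setLIntegral_Ico_pow_ne_top (n : ℕ) :
    ∫⁻ r in Set.Ico a b, ENNReal.ofReal (r ^ n) ≠ ∞ :=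
  ((continuous_pow n).integrableOn_Icc.mono_set Set.Ico_subset_Icc_self).lintegral_lt_top.ne

theorem setLIntegral_Ico_pow_mul_le (ha : 0 ≤ a) (hb : 0 ≤ b) (hab : a = b ∨ w ≤ |b - a|) (n : ℕ)
    {G : ℝ → ℝ≥0∞} {c : ℝ≥0} (hG : ∀ r s, |s - r| ≤ |b - a| → G r ≤ c * G s) :
    (∫⁻ s in Set.Ico b (b + w), ENNReal.ofReal (s ^ n)) *
        ∫⁻ r in Set.Ico a (a + w), ENNReal.ofReal (r ^ n) * G r ≤
      c * ((∫⁻ r in Set.Ico a (a + w), ENNReal.ofReal (r ^ n)) *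
        ∫⁻ s in Set.Ico b (b + w), ENNReal.ofReal (s ^ n) * G s) := by
  have hfin (x : ℝ) : ∫⁻ σ in Set.Ico 0 w, ENNReal.ofReal ((x + σ) ^ n) ≠ ∞ := by
    rw [← setLIntegral_Ico_add_right fun r => ENNReal.ofReal (r ^ n)]
    exact setLIntegral_Ico_pow_ne_top n
  simp only [setLIntegral_Ico_add_right]
  set A := ∫⁻ σ in Set.Ico 0 w, ENNReal.ofReal ((a + σ) ^ n)
  set B := ∫⁻ σ in Set.Ico 0 w, ENNReal.ofReal ((b + σ) ^ n)
  have hmass : ∫⁻ σ in Set.Ico 0 w, A * ENNReal.ofReal ((b + σ) ^ n) = A * B :=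
    lintegral_const_mul' _ _ (hfin a)
  calc B * ∫⁻ σ in Set.Ico 0 w, ENNReal.ofReal ((a + σ) ^ n) * G (a + σ)
      = ∫⁻ σ in Set.Ico 0 w, B * ENNReal.ofReal ((a + σ) ^ n) * G (a + σ) := by
        simp only [mul_assoc, lintegral_const_mul' _ _ (hfin b), B]
    _ ≤ ∫⁻ σ in Set.Ico 0 w, A * ENNReal.ofReal ((b + σ) ^ n) * (c * G (b + σ)) := by
        refine setLIntegral_mul_le_of_excess measurableSet_Ico (by fun_prop) (by fun_prop) ?_ ?_
          (fun σ _ => hG _ _ (by rw [add_sub_add_right_eq_sub])) fun σ hσ τ hτ h₁ h₂ => hG _ _ ?_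
        · rw [hmass, lintegral_const_mul' _ _ (hfin b), mul_comm]
        · rw [hmass]
          exact ENNReal.mul_ne_top (hfin a) (hfin b)
        · refine abs_add_sub_add_le hab ?_
            (sub_mul_sub_pos_of_weighted_pow_lt ha hb hσ.1 hτ.1 h₁ h₂)
          exact abs_sub_le_of_nonneg_of_le hσ.1 hσ.2.le hτ.1 hτ.2.le
    _ = c * (A * ∫⁻ σ in Set.Ico 0 w, ENNReal.ofReal ((b + σ) ^ n) * G (b + σ)) := by
        rw [← lintegral_const_mul' _ _ (hfin a), ← lintegral_const_mul' _ _ ENNReal.coe_ne_top]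
        simp only [mul_left_comm (c : ℝ≥0∞), mul_assoc, A]

end Radial

theorem setLIntegral_Ioi_pow_mul {a : ℝ} (ha : 0 < a) (n : ℕ) (f : ℝ → ℝ≥0∞) :
    ∫⁻ r in Set.Ioi 0, ENNReal.ofReal (r ^ n) * f r =
      ENNReal.ofReal (a ^ (n + 1)) *
        ∫⁻ s in Set.Ioi 0, ENNReal.ofReal (s ^ n) * f (a * s) := by
  have himage : (fun s => a * s) '' Set.Ioi 0 = Set.Ioi 0 := by
    rw [Set.image_mul_left_Ioi ha, mul_zero]
  have hderiv (s : ℝ) (_ : s ∈ Set.Ioi (0 : ℝ)) :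
      HasDerivWithinAt (fun s => a * s) a (Set.Ioi 0) s :=
    (hasDerivAt_const_mul a).hasDerivWithinAt
  conv_lhs => rw [← himage]
  rw [lintegral_image_eq_lintegral_abs_deriv_mul measurableSet_Ioi hderiv
    (mul_right_injective₀ ha.ne').injOn, ← lintegral_const_mul' _ _ ENNReal.ofReal_ne_top]
  refine lintegral_congr fun s => ?_
  rw [abs_of_pos ha, ← mul_assoc, ← mul_assoc, ← ENNReal.ofReal_mul ha.le,
    ← ENNReal.ofReal_mul (by positivity), mul_pow, pow_succ', mul_assoc]

section Seminorm

variable {E : Type*} [NormedAddCommGroup E] [NormedSpace ℝ E]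

theorem seminorm_pos_of_mem_sphere {p : Seminorm ℝ E} (hp : ∀ x, p x = 0 → x = 0)
    (θ : Metric.sphere (0 : E) 1) : 0 < p θ :=
  (apply_nonneg p _).lt_of_ne' fun h => ne_zero_of_mem_unit_sphere θ (hp _ h)

variable [FiniteDimensional ℝ E]

theorem continuous_seminorm_of_finiteDimensional (p : Seminorm ℝ E) : Continuous p :=
  continuousOn_univ.1 (p.convexOn.continuousOn isOpen_univ)

theorem exists_pos_mul_norm_le_seminorm {p : Seminorm ℝ E} (hp : ∀ x, p x = 0 → x = 0) :
    ∃ δ > 0, ∀ x, δ * ‖x‖ ≤ p x := by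
  rcases subsingleton_or_nontrivial E with _ | _
  · exact ⟨1, one_pos, fun x => by simp [Subsingleton.elim x 0]⟩
  obtain ⟨θ, hθ, hmin⟩ := (isCompact_sphere (0 : E) 1).exists_isMinOn
    (NormedSpace.sphere_nonempty.2 zero_le_one)
    (continuous_seminorm_of_finiteDimensional p).continuousOn
  refine ⟨p θ, seminorm_pos_of_mem_sphere hp ⟨θ, hθ⟩, fun x => ?_⟩
  rcases eq_or_ne x 0 with rfl | hx
  · simp
  have hmem : ‖x‖⁻¹ • x ∈ Metric.sphere (0 : E) 1 := by simp [norm_smul, hx]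
  calc p θ * ‖x‖ ≤ p (‖x‖⁻¹ • x) * ‖x‖ := by gcongr; exact hmin hmem
    _ = p x := by rw [map_smul_eq_mul, norm_inv, norm_norm]; field_simp

end Seminorm

section Polar

variable {E : Type*} [NormedAddCommGroup E] [NormedSpace ℝ E] [FiniteDimensional ℝ E]
  [Nontrivial E] [MeasurableSpace E] [BorelSpace E] (ν : Measure E) [ν.IsAddHaarMeasure]

theorem lintegral_eq_lintegral_toSphere {f : E → ℝ≥0∞} (hf : Measurable f) :
    ∫⁻ x, f x ∂ν = ∫⁻ θ, ∫⁻ r in Set.Ioi (0 : ℝ),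
      ENNReal.ofReal (r ^ (Module.finrank ℝ E - 1)) * f (r • (θ : E)) ∂volume ∂ν.toSphere := by
  have hpolar := ν.measurePreserving_homeomorphUnitSphereProd
  have hF : Measurable fun y : Metric.sphere (0 : E) 1 × Set.Ioi (0 : ℝ) =>
      f ((y.2 : ℝ) • (y.1 : E)) := hf.comp (by fun_prop)
  calc ∫⁻ x, f x ∂ν = ∫⁻ x : ({0}ᶜ : Set E), f x ∂ν.comap Subtype.val := by
        rw [lintegral_subtype_comap (measurableSet_singleton 0).compl,
          restrict_compl_singleton]
    _ = ∫⁻ y, f ((y.2 : ℝ) • (y.1 : E))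
          ∂ν.toSphere.prod (.volumeIoiPow (Module.finrank ℝ E - 1)) := by
        rw [← hpolar.lintegral_comp hF]
        refine lintegral_congr fun x => ?_
        rw [← homeomorphUnitSphereProd_symm_apply_coe, Homeomorph.symm_apply_apply]
    _ = _ := by
        rw [lintegral_prod _ hF.aemeasurable]
        refine lintegral_congr fun θ => ?_
        rw [← lintegral_subtype_comap measurableSet_Ioi]
        exact lintegral_withDensity_eq_lintegral_mul _ (by fun_prop)
          (hF.comp measurable_prodMk_left)

theorem setLIntegral_seminorm_preimage {p : Seminorm ℝ E} (hp : ∀ x, p x = 0 → x = 0)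
    {A : Set ℝ} (hA : MeasurableSet A) (hA₀ : A ⊆ Set.Ici 0) {g : E → ℝ≥0∞} (hg : Measurable g) :
    ∫⁻ x in p ⁻¹' A, g x ∂ν =
      ∫⁻ θ, ENNReal.ofReal ((p θ)⁻¹ ^ Module.finrank ℝ E) *
        (∫⁻ s in A, ENNReal.ofReal (s ^ (Module.finrank ℝ E - 1)) * g (((p θ)⁻¹ * s) • (θ : E)))
          ∂ν.toSphere := by
  have hpA : MeasurableSet (p ⁻¹' A) := (continuous_seminorm_of_finiteDimensional p).measurable hA
  rw [← lintegral_indicator hpA, lintegral_eq_lintegral_toSphere ν (hg.indicator hpA)]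
  refine lintegral_congr fun θ => ?_
  have hpθ : 0 < p θ := seminorm_pos_of_mem_sphere hp θ
  rw [setLIntegral_Ioi_pow_mul (inv_pos.2 hpθ), Nat.sub_add_cancel Module.finrank_pos]
  congr 1
  calc ∫⁻ s in Set.Ioi (0 : ℝ), ENNReal.ofReal (s ^ (Module.finrank ℝ E - 1)) *
          (p ⁻¹' A).indicator g (((p θ)⁻¹ * s) • (θ : E))
      = ∫⁻ s in Set.Ioi (0 : ℝ), A.indicator (fun s =>
          ENNReal.ofReal (s ^ (Module.finrank ℝ E - 1)) * g (((p θ)⁻¹ * s) • (θ : E))) s := by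
        refine setLIntegral_congr_fun measurableSet_Ioi fun s hs => ?_
        have hps : p (((p θ)⁻¹ * s) • (θ : E)) = s := by
          rw [map_smul_eq_mul, Real.norm_of_nonneg (by have := hs.out; positivity), mul_right_comm,
            inv_mul_cancel₀ hpθ.ne', one_mul]
        by_cases hsA : s ∈ A <;> simp [Set.indicator, hps, hsA]
    _ = _ := by
        rw [setLIntegral_congr Ioi_ae_eq_Ici, setLIntegral_indicator hA,
          Set.inter_eq_left.2 hA₀]

end Polar

section Translation

/-- Every translate of `S` by a vector of `T` has at least the fraction `1 / c` of the mass of `S`.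
With `T` a ball of radius `Δ` and `c = e ^ ε` this is the `ε`-differential privacy of additive noise
with sensitivity `Δ`. -/
def IsTranslationDominated {G : Type*} [Add G] [MeasurableSpace G] (T : Set G) (c : ℝ≥0)
    (μ : Measure G) : Prop :=
  ∀ S, MeasurableSet S → ∀ t ∈ T, μ S ≤ c * μ ((· + t) '' S)

theorem isTranslationDominated_withDensity {G : Type*} [AddGroup G] [MeasurableSpace G]
    [MeasurableAdd G] {ν : Measure G} [ν.IsAddRightInvariant] {T : Set G} {c : ℝ≥0} {f : G → ℝ≥0∞}
    (hf : ∀ t ∈ T, ∀ x, f x ≤ c * f (x + t)) :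
    IsTranslationDominated T c (ν.withDensity f) := by
  intro S hS t ht
  have himg : MeasurableSet ((· + t) '' S) := (MeasurableEquiv.addRight t).measurableSet_image.2 hS
  rw [withDensity_apply _ hS, withDensity_apply _ himg,
    ← (measurePreserving_add_right ν t).setLIntegral_comp_emb
      (MeasurableEquiv.addRight t).measurableEmbedding,
    ← lintegral_const_mul' _ _ ENNReal.coe_ne_top]
  exact lintegral_mono (hf t ht)

theorem ae_measure_image_add_right_eq_zero {G : Type*} [AddGroup G] [MeasurableSpace G]
    [MeasurableAdd₂ G] [MeasurableNeg G] {ν : Measure G} [SFinite ν] [ν.IsAddLeftInvariant]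
    [ν.IsNegInvariant] (μ : Measure G) [SFinite μ] {N : Set G} (hN : MeasurableSet N)
    (hN₀ : ν N = 0) : ∀ᵐ t ∂ν, μ ((· + t) '' N) = 0 := by
  have hmeas : MeasurableSet {z : G × G | z.2 - z.1 ∈ N} :=
    hN.preimage (measurable_snd.sub measurable_fst)
  have hnull : (ν.prod μ) {z : G × G | z.2 - z.1 ∈ N} = 0 := by
    rw [Measure.prod_apply_symm hmeas]
    refine lintegral_eq_zero_of_ae_eq_zero (.of_forall fun x => ?_)
    exact ((Measure.measurePreserving_sub_left ν x).measure_preimage hN.nullMeasurableSet).trans hN₀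
  filter_upwards [(Measure.measure_prod_null hmeas).1 hnull] with t ht
  have ht : μ ((fun x => x - t) ⁻¹' N) = 0 := ht
  rw [Set.image_add_right]
  simpa only [sub_eq_add_neg] using ht

theorem IsTranslationDominated.absolutelyContinuous {G : Type*} [AddGroup G] [MeasurableSpace G]
    [MeasurableAdd₂ G] [MeasurableNeg G] {ν μ : Measure G} [SFinite ν] [ν.IsAddLeftInvariant]
    [ν.IsNegInvariant] [SFinite μ] {T : Set G} {c : ℝ≥0} (hT : ν T ≠ 0)
    (hμ : IsTranslationDominated T c μ) : μ ≪ ν := by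
  refine Measure.AbsolutelyContinuous.mk fun N hN hN₀ => ?_
  obtain ⟨t, htT, ht⟩ : ∃ t ∈ T, μ ((· + t) '' N) = 0 := by
    by_contra! h
    exact hT (measure_mono_null h (ae_measure_image_add_right_eq_zero μ hN hN₀))
  simpa only [ht, mul_zero, nonpos_iff_eq_zero] using hμ N hN t htT

section UpperBallDensity

variable {X : Type*} [PseudoMetricSpace X] [MeasurableSpace X]

/-- The upper density of `μ` with respect to `ν`, taken along closed balls of radius `1 / (n + 1)`.
In a finite-dimensional normed space it is a version of `μ.rnDeriv ν` whose value is determined at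
every point, so that inequalities between masses of balls pass to it without exceptional null
sets. -/
def upperBallDensity (ν μ : Measure X) (x : X) : ℝ≥0∞ :=
  limsup (fun n : ℕ => μ (Metric.closedBall x (1 / ((n : ℝ) + 1))) /
    ν (Metric.closedBall x (1 / ((n : ℝ) + 1)))) atTop

variable [SecondCountableTopology X] [OpensMeasurableSpace X]

theorem measurable_measure_closedBall (μ : Measure X) [SFinite μ] (r : ℝ) :
    Measurable fun x => μ (Metric.closedBall x r) :=
  measurable_measure_prodMk_left (s := {z : X × X | dist z.2 z.1 ≤ r})
    (measurableSet_le (measurable_snd.dist measurable_fst) measurable_const)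

theorem measurable_upperBallDensity (ν μ : Measure X) [SFinite ν] [SFinite μ] :
    Measurable (upperBallDensity ν μ) :=
  .limsup fun _ => (measurable_measure_closedBall μ _).div (measurable_measure_closedBall ν _)

end UpperBallDensity

variable {E : Type*} [NormedAddCommGroup E] [MeasurableSpace E] [BorelSpace E]

theorem IsTranslationDominated.upperBallDensity_le {ν μ : Measure E} [ν.IsAddHaarMeasure]
    {T : Set E} {c : ℝ≥0} (hμ : IsTranslationDominated T c μ) {t : E} (ht : t ∈ T) (x : E) :
    upperBallDensity ν μ x ≤ c * upperBallDensity ν μ (x + t) := by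
  unfold upperBallDensity
  rw [← ENNReal.limsup_const_mul_of_ne_top ENNReal.coe_ne_top]
  refine limsup_le_limsup (.of_forall fun n => ?_)
  set r : ℝ := 1 / ((n : ℝ) + 1)
  have hball : μ (Metric.closedBall x r) ≤ c * μ (Metric.closedBall (x + t) r) := by
    simpa using hμ (Metric.closedBall x r) measurableSet_closedBall t ht
  change μ (Metric.closedBall x r) / ν (Metric.closedBall x r) ≤
    c * (μ (Metric.closedBall (x + t) r) / ν (Metric.closedBall (x + t) r))
  rw [ν.addHaar_closedBall_center (x + t), ν.addHaar_closedBall_center x, ← mul_div_assoc]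
  exact ENNReal.div_le_div_right hball _

variable [NormedSpace ℝ E] [FiniteDimensional ℝ E]

theorem withDensity_upperBallDensity {ν μ : Measure E} [IsLocallyFiniteMeasure ν]
    [IsLocallyFiniteMeasure μ] (hμν : μ ≪ ν) : ν.withDensity (upperBallDensity ν μ) = μ := by
  have hradius : Tendsto (fun n : ℕ => 1 / ((n : ℝ) + 1)) atTop (𝓝[>] 0) :=
    tendsto_nhdsWithin_iff.2 ⟨tendsto_one_div_add_atTop_nhds_zero_nat,
      .of_forall fun _ => Set.mem_Ioi.2 Nat.one_div_pos_of_nat⟩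
  have hae : upperBallDensity ν μ =ᵐ[ν] μ.rnDeriv ν := by
    filter_upwards [Besicovitch.ae_tendsto_rnDeriv μ ν] with x hx
    exact (hx.comp hradius).limsup_eq
  rw [withDensity_congr_ae hae, Measure.withDensity_rnDeriv_eq _ _ hμν]

end Translation

section Layers

variable {E : Type*} [AddCommGroup E] [Module ℝ E]

/-- The `k`-th layer of width `w`: the points at which the seminorm `p` lies in
`[k * w, (k + 1) * w)`. -/
def layer (p : Seminorm ℝ E) (w : ℝ) (k : ℕ) : Set E := p ⁻¹' Set.Ico (k * w) ((k + 1) * w)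

/-- The index of the layer of width `w` containing `x`, when `w` is positive. -/
def layerIndex (p : Seminorm ℝ E) (w : ℝ) (x : E) : ℕ := ⌊p x / w⌋₊

variable {p : Seminorm ℝ E} {w : ℝ}

theorem mem_layer_iff (hw : 0 < w) {x : E} {k : ℕ} : x ∈ layer p w k ↔ layerIndex p w x = k := by
  rw [layerIndex, Nat.floor_eq_iff (div_nonneg (apply_nonneg p x) hw.le), le_div_iff₀ hw,
    div_lt_iff₀ hw]
  rfl

theorem mem_layer_layerIndex (hw : 0 < w) (x : E) : x ∈ layer p w (layerIndex p w x) :=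
  (mem_layer_iff hw).2 rfl

theorem abs_layerIndex_add_sub_le (hw : 0 < w) {n : ℕ} {x t : E} (ht : p t ≤ n * w) :
    |(layerIndex p w (x + t) : ℝ) - layerIndex p w x| ≤ n := by
  have floor_le {u v : ℝ} (hv : 0 ≤ v) (huv : u ≤ v + n * w) : ⌊u / w⌋₊ ≤ ⌊v / w⌋₊ + n := by
    rw [← Nat.floor_add_natCast (div_nonneg hv hw.le)]
    refine Nat.floor_le_floor ?_
    rwa [div_le_iff₀ hw, add_mul, div_mul_cancel₀ _ hw.ne']
  have h₁ : layerIndex p w (x + t) ≤ layerIndex p w x + n :=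
    floor_le (apply_nonneg p x) ((map_add_le_add p x t).trans (by gcongr))
  have h₂ : layerIndex p w x ≤ layerIndex p w (x + t) + n := by
    refine floor_le (apply_nonneg p _) ?_
    calc p x = p ((x + t) - t) := by rw [add_sub_cancel_right]
      _ ≤ p (x + t) + p t := map_sub_le_add p _ _
      _ ≤ p (x + t) + n * w := by gcongr
  rw [abs_sub_le_iff, sub_le_iff_le_add', sub_le_iff_le_add']
  exact ⟨by exact_mod_cast h₁, by exact_mod_cast h₂⟩

theorem setLIntegral_ray_mul_le (hw : 0 < w) {c : ℝ≥0} {g : E → ℝ≥0∞} {k m : ℕ}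
    (hgc : ∀ x t, p t ≤ |(m : ℝ) - k| * w → g x ≤ c * g (x + t)) {θ : E} (hθ : 0 < p θ) (n : ℕ) :
    (∫⁻ s in Set.Ico (m * w) (m * w + w), ENNReal.ofReal (s ^ n)) *
        ∫⁻ r in Set.Ico (k * w) (k * w + w), ENNReal.ofReal (r ^ n) * g (((p θ)⁻¹ * r) • θ) ≤
      c * ((∫⁻ r in Set.Ico (k * w) (k * w + w), ENNReal.ofReal (r ^ n)) *
        ∫⁻ s in Set.Ico (m * w) (m * w + w), ENNReal.ofReal (s ^ n) * g (((p θ)⁻¹ * s) • θ)) := by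
  have hgap : |(m : ℝ) * w - k * w| = |(m : ℝ) - k| * w := by
    rw [← sub_mul, abs_mul, abs_of_pos hw]
  have hkm : (k : ℝ) * w = m * w ∨ w ≤ |(m : ℝ) * w - k * w| := by
    rcases eq_or_ne k m with rfl | hne
    · exact .inl rfl
    · refine .inr (hgap ▸ le_mul_of_one_le_left hw.le ?_)
      exact_mod_cast Int.one_le_abs (sub_ne_zero.2 (Nat.cast_injective.ne hne.symm))
  refine setLIntegral_Ico_pow_mul_le (by positivity) (by positivity) hkm n fun r s hrs => ?_
  have hstep : p (((p θ)⁻¹ * (s - r)) • θ) ≤ |(m : ℝ) - k| * w := by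
    rw [map_smul_eq_mul, norm_mul, Real.norm_of_nonneg (inv_pos.2 hθ).le, mul_right_comm,
      inv_mul_cancel₀ hθ.ne', one_mul, Real.norm_eq_abs, ← hgap]
    exact hrs
  simpa only [← add_smul, ← mul_add, add_sub_cancel] using hgc (((p θ)⁻¹ * r) • θ) _ hstep

end Layers

section LayerMeasure

variable {E : Type*} [NormedAddCommGroup E] [NormedSpace ℝ E] [FiniteDimensional ℝ E]
  [MeasurableSpace E] {p : Seminorm ℝ E} {w : ℝ}

theorem measure_layer_ne_top (hp : ∀ x, p x = 0 → x = 0) (ν : Measure E)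
    [IsFiniteMeasureOnCompacts ν] (w : ℝ) (k : ℕ) : ν (layer p w k) ≠ ∞ := by
  obtain ⟨δ, hδ, hδp⟩ := exists_pos_mul_norm_le_seminorm hp
  have hsub : layer p w k ⊆ Metric.closedBall 0 ((k + 1) * w / δ) := fun x hx => by
    rw [mem_closedBall_zero_iff, le_div_iff₀' hδ]
    exact (hδp x).trans hx.2.le
  exact ((measure_mono hsub).trans_lt measure_closedBall_lt_top).ne

theorem measure_layer_ne_zero [Nontrivial E] (hp : ∀ x, p x = 0 → x = 0) (ν : Measure E)
    [ν.IsOpenPosMeasure] (hw : 0 < w) (k : ℕ) : ν (layer p w k) ≠ 0 := by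
  obtain ⟨x, hx⟩ := exists_ne (0 : E)
  have hpx : 0 < p x := (apply_nonneg p x).lt_of_ne' (hx ∘ hp x)
  set r : ℝ := (k + 1 / 2) * w
  have hr : p ((r / p x) • x) = r := by
    rw [map_smul_eq_mul, Real.norm_of_nonneg (by positivity), div_mul_cancel₀ _ hpx.ne']
  have hopen : IsOpen (p ⁻¹' Set.Ioo (k * w) ((k + 1) * w)) :=
    isOpen_Ioo.preimage (continuous_seminorm_of_finiteDimensional p)
  have hmem : (r / p x) • x ∈ p ⁻¹' Set.Ioo (k * w) ((k + 1) * w) := by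
    rw [Set.mem_preimage, hr]
    constructor <;> simp only [r] <;> nlinarith
  exact ((hopen.measure_pos ν ⟨_, hmem⟩).trans_le
    (measure_mono (Set.preimage_mono Set.Ioo_subset_Ico_self))).ne'

variable [BorelSpace E]

theorem measurable_seminorm (p : Seminorm ℝ E) : Measurable p :=
  (continuous_seminorm_of_finiteDimensional p).measurable

theorem measurableSet_layer (p : Seminorm ℝ E) (w : ℝ) (k : ℕ) : MeasurableSet (layer p w k) :=
  measurable_seminorm p measurableSet_Ico

theorem measurable_layerIndex (p : Seminorm ℝ E) (w : ℝ) : Measurable (layerIndex p w) :=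
  Nat.measurable_floor.comp ((measurable_seminorm p).div_const w)

end LayerMeasure

section Average

variable {E : Type*} [NormedAddCommGroup E] [NormedSpace ℝ E] [FiniteDimensional ℝ E]
  [MeasurableSpace E] [BorelSpace E] {p : Seminorm ℝ E} {w : ℝ} {c : ℝ≥0} {ν μ : Measure E}

theorem setLIntegral_layer [Nontrivial E] [ν.IsAddHaarMeasure] (hp : ∀ x, p x = 0 → x = 0)
    (hw : 0 < w) {g : E → ℝ≥0∞} (hg : Measurable g) (k : ℕ) :
    ∫⁻ x in layer p w k, g x ∂ν =
      ∫⁻ θ, ENNReal.ofReal ((p θ)⁻¹ ^ Module.finrank ℝ E) *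
        (∫⁻ s in Set.Ico (k * w) (k * w + w), ENNReal.ofReal (s ^ (Module.finrank ℝ E - 1)) *
          g (((p θ)⁻¹ * s) • (θ : E))) ∂ν.toSphere := by
  rw [layer, add_one_mul]
  exact setLIntegral_seminorm_preimage ν hp measurableSet_Ico
    (fun s hs => (by positivity : 0 ≤ k * w).trans hs.1) hg

theorem measure_layer [Nontrivial E] [ν.IsAddHaarMeasure] (hp : ∀ x, p x = 0 → x = 0)
    (hw : 0 < w) (k : ℕ) :
    ν (layer p w k) =
      (∫⁻ s in Set.Ico (k * w) (k * w + w), ENNReal.ofReal (s ^ (Module.finrank ℝ E - 1))) *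
        ∫⁻ θ, ENNReal.ofReal ((p θ)⁻¹ ^ Module.finrank ℝ E) ∂ν.toSphere := by
  rw [← setLIntegral_one, setLIntegral_layer hp hw measurable_const]
  simp only [mul_one]
  rw [lintegral_mul_const' _ _ (setLIntegral_Ico_pow_ne_top _), mul_comm]

theorem measure_layer_mul_setLIntegral_le [Nontrivial E] [ν.IsAddHaarMeasure]
    (hp : ∀ x, p x = 0 → x = 0) (hw : 0 < w) {g : E → ℝ≥0∞} (hg : Measurable g) {k m : ℕ}
    (hgc : ∀ x t, p t ≤ |(m : ℝ) - k| * w → g x ≤ c * g (x + t)) :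
    ν (layer p w m) * ∫⁻ x in layer p w k, g x ∂ν ≤
      c * (ν (layer p w k) * ∫⁻ x in layer p w m, g x ∂ν) := by
  set n := Module.finrank ℝ E - 1
  set I : ℕ → ℝ≥0∞ := fun k => ∫⁻ s in Set.Ico (k * w) (k * w + w), ENNReal.ofReal (s ^ n)
  have hI (k : ℕ) : I k ≠ ∞ := setLIntegral_Ico_pow_ne_top n
  set J : ℕ → E → ℝ≥0∞ := fun k θ =>
    ∫⁻ s in Set.Ico (k * w) (k * w + w), ENNReal.ofReal (s ^ n) * g (((p θ)⁻¹ * s) • θ)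
  have hray (θ : Metric.sphere (0 : E) 1) : I m * J k θ ≤ c * (I k * J m θ) :=
    setLIntegral_ray_mul_le hw hgc (seminorm_pos_of_mem_sphere hp θ) n
  set ρ : Metric.sphere (0 : E) 1 → ℝ≥0∞ := fun θ =>
    ENNReal.ofReal ((p θ)⁻¹ ^ Module.finrank ℝ E)
  have hpull (a : ℝ≥0∞) (ha : a ≠ ∞) (f : Metric.sphere (0 : E) 1 → ℝ≥0∞) :
      ∫⁻ θ, ρ θ * (a * f θ) ∂ν.toSphere = a * ∫⁻ θ, ρ θ * f θ ∂ν.toSphere := by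
    simp only [mul_left_comm _ a, lintegral_const_mul' _ _ ha]
  set Ω := ∫⁻ θ, ρ θ ∂ν.toSphere
  rw [measure_layer hp hw, measure_layer hp hw, setLIntegral_layer hp hw hg,
    setLIntegral_layer hp hw hg]
  calc I m * Ω * ∫⁻ θ, ρ θ * J k θ ∂ν.toSphere
      = Ω * ∫⁻ θ, ρ θ * (I m * J k θ) ∂ν.toSphere := by
        rw [hpull _ (hI m)]
        ring
    _ ≤ Ω * ∫⁻ θ, ρ θ * (c * (I k * J m θ)) ∂ν.toSphere :=
        mul_le_mul_right (lintegral_mono fun θ => mul_le_mul_right (hray θ) _) _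
    _ = c * (I k * Ω * ∫⁻ θ, ρ θ * J m θ ∂ν.toSphere) := by
        rw [hpull _ ENNReal.coe_ne_top, hpull _ (hI k)]
        ring

theorem IsTranslationDominated.measure_layer_div_le [Nontrivial E] [ν.IsAddHaarMeasure]
    [IsLocallyFiniteMeasure μ] {Δ : ℝ} (hμ : IsTranslationDominated {t | p t ≤ Δ} c μ)
    (hp : ∀ x, p x = 0 → x = 0) (hΔ : 0 < Δ) (hw : 0 < w) {k m : ℕ}
    (hkm : |(m : ℝ) - k| * w ≤ Δ) :
    μ (layer p w k) / ν (layer p w k) ≤ c * (μ (layer p w m) / ν (layer p w m)) := by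
  have hball : ν {t | p t ≤ Δ} ≠ 0 := by
    have hopen : IsOpen {t | p t < Δ} :=
      isOpen_lt (continuous_seminorm_of_finiteDimensional p) continuous_const
    have hpos := hopen.measure_pos ν ⟨0, (map_zero p).trans_lt hΔ⟩
    exact (hpos.trans_le (measure_mono fun t (ht : p t < Δ) => ht.le)).ne'
  have hdens (j : ℕ) : ∫⁻ x in layer p w j, upperBallDensity ν μ x ∂ν = μ (layer p w j) := by
    rw [← withDensity_apply _ (measurableSet_layer p w j),
      withDensity_upperBallDensity (hμ.absolutelyContinuous hball)]
  have hmass : ν (layer p w m) * μ (layer p w k) ≤ c * (ν (layer p w k) * μ (layer p w m)) := by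
    rw [← hdens k, ← hdens m]
    exact measure_layer_mul_setLIntegral_le hp hw (measurable_upperBallDensity ν μ)
      fun x t ht => hμ.upperBallDensity_le (ht.trans hkm) x
  rw [ENNReal.div_le_iff_le_mul (.inl (measure_layer_ne_zero hp ν hw k))
    (.inl (measure_layer_ne_top hp ν w k)), ← mul_div_assoc, ← ENNReal.mul_div_right_comm,
    ENNReal.le_div_iff_mul_le (.inl (measure_layer_ne_zero hp ν hw m))
      (.inl (measure_layer_ne_top hp ν w m))]
  calc μ (layer p w k) * ν (layer p w m) = ν (layer p w m) * μ (layer p w k) := mul_comm _ _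
    _ ≤ c * (ν (layer p w k) * μ (layer p w m)) := hmass
    _ = c * μ (layer p w m) * ν (layer p w k) := by ring

/-- The measure obtained from `μ` by spreading its mass in each layer of width `w` evenly, with
respect to `ν`, over that layer. -/
def layerAverage (p : Seminorm ℝ E) (w : ℝ) (ν μ : Measure E) : Measure E :=
  ν.withDensity fun x => μ (layer p w (layerIndex p w x)) / ν (layer p w (layerIndex p w x))

theorem IsTranslationDominated.layerAverage [Nontrivial E] [ν.IsAddHaarMeasure]
    [IsLocallyFiniteMeasure μ] {n : ℕ} (hμ : IsTranslationDominated {t | p t ≤ n * w} c μ)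
    (hp : ∀ x, p x = 0 → x = 0) (hn : n ≠ 0) (hw : 0 < w) :
    IsTranslationDominated {t | p t ≤ n * w} c (layerAverage p w ν μ) :=
  isTranslationDominated_withDensity fun t ht x => hμ.measure_layer_div_le hp (by positivity) hw
    (mul_le_mul_of_nonneg_right (abs_layerIndex_add_sub_le hw ht) hw.le)

theorem layerAverage_layer [Nontrivial E] [IsFiniteMeasureOnCompacts ν] [ν.IsOpenPosMeasure]
    (hp : ∀ x, p x = 0 → x = 0) (hw : 0 < w) (k : ℕ) :
    layerAverage p w ν μ (layer p w k) = μ (layer p w k) := by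
  rw [layerAverage, withDensity_apply _ (measurableSet_layer p w k)]
  calc ∫⁻ x in layer p w k, μ (layer p w (layerIndex p w x)) / ν (layer p w (layerIndex p w x)) ∂ν
      = ∫⁻ _ in layer p w k, μ (layer p w k) / ν (layer p w k) ∂ν :=
        setLIntegral_congr_fun (measurableSet_layer p w k) fun x hx => by
          rw [(mem_layer_iff hw).1 hx]
    _ = μ (layer p w k) := by
        rw [setLIntegral_const, ENNReal.div_mul_cancel (measure_layer_ne_zero hp ν hw k)
          (measure_layer_ne_top hp ν w k)]

theorem map_layerIndex_layerAverage [Nontrivial E] [IsFiniteMeasureOnCompacts ν]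
    [ν.IsOpenPosMeasure] (hp : ∀ x, p x = 0 → x = 0) (hw : 0 < w) :
    (layerAverage p w ν μ).map (layerIndex p w) = μ.map (layerIndex p w) := by
  refine Measure.ext_of_singleton fun k => ?_
  have hfiber : layerIndex p w ⁻¹' {k} = layer p w k := Set.ext fun x => (mem_layer_iff hw).symm
  rw [Measure.map_apply (measurable_layerIndex p w) (measurableSet_singleton k),
    Measure.map_apply (measurable_layerIndex p w) (measurableSet_singleton k), hfiber,
    layerAverage_layer hp hw]

theorem layerAverage_univ [Nontrivial E] [IsFiniteMeasureOnCompacts ν] [ν.IsOpenPosMeasure]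
    (hp : ∀ x, p x = 0 → x = 0) (hw : 0 < w) :
    layerAverage p w ν μ Set.univ = μ Set.univ := by
  rw [← Set.preimage_univ (f := layerIndex p w),
    ← Measure.map_apply (measurable_layerIndex p w) .univ, map_layerIndex_layerAverage hp hw,
    Measure.map_apply (measurable_layerIndex p w) .univ]

theorem lintegral_seminorm_le_add_of_map_layerIndex_eq (hw : 0 < w) {μ' : Measure E}
    (hmap : μ.map (layerIndex p w) = μ'.map (layerIndex p w)) :
    ∫⁻ x, ENNReal.ofReal (p x) ∂μ ≤
      ∫⁻ x, ENNReal.ofReal (p x) ∂μ' + ENNReal.ofReal w * μ Set.univ := by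
  have hlayer (x : E) : p x ∈ Set.Ico (layerIndex p w x * w) ((layerIndex p w x + 1) * w) :=
    mem_layer_layerIndex hw x
  calc ∫⁻ x, ENNReal.ofReal (p x) ∂μ
      ≤ ∫⁻ x, (ENNReal.ofReal (layerIndex p w x * w) + ENNReal.ofReal w) ∂μ := by
        refine lintegral_mono fun x => ?_
        rw [← ENNReal.ofReal_add (by positivity) hw.le, ← add_one_mul]
        exact ENNReal.ofReal_le_ofReal (hlayer x).2.le
    _ = ∫⁻ k : ℕ, ENNReal.ofReal (k * w) ∂μ.map (layerIndex p w) +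
          ENNReal.ofReal w * μ Set.univ := by
        rw [lintegral_add_right _ measurable_const, lintegral_const,
          lintegral_map .of_discrete (measurable_layerIndex p w)]
    _ = ∫⁻ x, ENNReal.ofReal (layerIndex p w x * w) ∂μ' + ENNReal.ofReal w * μ Set.univ := by
        rw [hmap, lintegral_map .of_discrete (measurable_layerIndex p w)]
    _ ≤ _ := by
        gcongr with x
        exact (hlayer x).1

theorem tendsto_lintegral_layerAverage [Nontrivial E] [IsFiniteMeasureOnCompacts ν]
    [ν.IsOpenPosMeasure] [IsFiniteMeasure μ] (hp : ∀ x, p x = 0 → x = 0) :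
    Tendsto (fun w => ∫⁻ x, ENNReal.ofReal (p x) ∂layerAverage p w ν μ) (𝓝[>] 0)
      (𝓝 (∫⁻ x, ENNReal.ofReal (p x) ∂μ)) := by
  have herror : Tendsto (fun w => ENNReal.ofReal w * μ Set.univ) (𝓝[>] 0) (𝓝 0) := by
    have hcont : Continuous fun w => ENNReal.ofReal w * μ Set.univ :=
      (ENNReal.continuous_mul_const (measure_ne_top μ _)).comp ENNReal.continuous_ofReal
    exact (hcont.tendsto' 0 0 (by rw [ENNReal.ofReal_zero, zero_mul])).mono_left nhdsWithin_le_nhds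
  have hlower := ENNReal.Tendsto.sub (tendsto_const_nhds (x := ∫⁻ x, ENNReal.ofReal (p x) ∂μ))
    herror (.inr ENNReal.zero_ne_top)
  have hupper := (tendsto_const_nhds (x := ∫⁻ x, ENNReal.ofReal (p x) ∂μ)).add herror
  rw [tsub_zero] at hlower
  rw [add_zero] at hupper
  refine tendsto_of_tendsto_of_tendsto_of_le_of_le' hlower hupper ?_ ?_ <;>
    filter_upwards [self_mem_nhdsWithin] with w hw
  · exact tsub_le_iff_right.2 (lintegral_seminorm_le_add_of_map_layerIndex_eq hw
      (map_layerIndex_layerAverage hp hw).symm)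
  · rw [← layerAverage_univ (ν := ν) hp hw]
    exact lintegral_seminorm_le_add_of_map_layerIndex_eq hw (map_layerIndex_layerAverage hp hw)

end Average

theorem approx_preserves_dp_and_cost_general {E : Type*} [NormedAddCommGroup E] [NormedSpace ℝ E]
    [FiniteDimensional ℝ E] [Nontrivial E] [MeasurableSpace E] [BorelSpace E] {p : Seminorm ℝ E}
    (hp : ∀ x, p x = 0 → x = 0) (ν : Measure E) [ν.IsAddHaarMeasure] (μ : Measure E)
    [IsFiniteMeasure μ] {Δ : ℝ} (hΔ : 0 < Δ) {c : ℝ≥0}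
    (hμ : IsTranslationDominated {t | p t ≤ Δ} c μ) :
    (∀ i : ℕ, 1 ≤ i →
      layerAverage p (Δ / i) ν μ Set.univ = μ Set.univ ∧
        IsTranslationDominated {t | p t ≤ Δ} c (layerAverage p (Δ / i) ν μ)) ∧
    Tendsto (fun i : ℕ => ∫⁻ x, ENNReal.ofReal (p x) ∂layerAverage p (Δ / i) ν μ) atTop
      (𝓝 (∫⁻ x, ENNReal.ofReal (p x) ∂μ)) := by
  have hwidth {i : ℕ} (hi : 1 ≤ i) : 0 < Δ / i := div_pos hΔ (Nat.cast_pos.2 hi)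
  refine ⟨fun i hi => ⟨layerAverage_univ hp (hwidth hi), ?_⟩,
    (tendsto_lintegral_layerAverage hp).comp (tendsto_nhdsWithin_iff.2
      ⟨tendsto_const_div_atTop_nhds_zero_nat Δ, ?_⟩)⟩
  · have hi₀ : i ≠ 0 := Nat.one_le_iff_ne_zero.1 hi
    have hΔi : Δ = i * (Δ / i) := (mul_div_cancel₀ Δ (Nat.cast_ne_zero.2 hi₀)).symm
    rw [hΔi] at hμ
    have havg := hμ.layerAverage (ν := ν) hp hi₀ (hwidth hi)
    rwa [← hΔi] at havg
  · filter_upwards [eventually_ge_atTop 1] with i hi using hwidth hi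

/-- The ℓ¹ norm `l1` on ℝ², bundled as a seminorm. -/
def l1Seminorm : Seminorm ℝ (ℝ × ℝ) :=
  .of l1 (fun x y => by
      have h₁ := abs_add_le x.1 y.1
      have h₂ := abs_add_le x.2 y.2
      simp only [l1, Prod.fst_add, Prod.snd_add]
      linarith)
    fun a x => by simp only [l1, Prod.smul_fst, Prod.smul_snd, smul_eq_mul, abs_mul, mul_add,
      Real.norm_eq_abs]

theorem eq_zero_of_l1_eq_zero {x : ℝ × ℝ} (hx : l1 x = 0) : x = 0 := by
  obtain ⟨h₁, h₂⟩ := (add_eq_zero_iff_of_nonneg (abs_nonneg x.1) (abs_nonneg x.2)).1 hx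
  exact Prod.ext (abs_eq_zero.1 h₁) (abs_eq_zero.1 h₂)

theorem layer_l1Seminorm (Δ : ℝ) (i k : ℕ) : layer l1Seminorm (Δ / i) k = Aset Δ i k := by
  rw [layer, ← mul_div_assoc, ← mul_div_assoc]
  rfl

theorem layerIndex_l1Seminorm (Δ : ℝ) (i : ℕ) :
    layerIndex l1Seminorm (Δ / i) = layerIdx Δ i := by
  funext x
  rw [layerIndex, div_div_eq_mul_div]
  rfl

theorem layerAverage_l1Seminorm (Δ : ℝ) (μ : Measure (ℝ × ℝ)) (i : ℕ) :
    layerAverage l1Seminorm (Δ / i) volume μ = approxMeasure Δ μ i := by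
  simp only [layerAverage, layer_l1Seminorm, layerIndex_l1Seminorm, approxMeasure]

/-- Lemma 1 (d = 2): each layer-averaged measure μ_i is a probability measure
satisfying the ε-differential-privacy constraint, and V(μ_i) → V(μ). -/
theorem approx_preserves_dp_and_cost (ε Δ : ℝ) (hε : 0 < ε) (hΔ : 0 < Δ)
    (μ : Measure (ℝ × ℝ)) (hμ : IsProbabilityMeasure μ) (hdp : DPC ε Δ μ)
    (hfin : cost μ < ⊤) :
    (∀ i : ℕ, 1 ≤ i →
      IsProbabilityMeasure (approxMeasure Δ μ i) ∧ DPC ε Δ (approxMeasure Δ μ i)) ∧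
    Tendsto (fun i : ℕ => cost (approxMeasure Δ μ i)) atTop (nhds (cost μ)) := by
  have hdp' : IsTranslationDominated {t | l1Seminorm t ≤ Δ} (exp ε).toNNReal μ := hdp
  obtain ⟨havg, hcost⟩ :=
    approx_preserves_dp_and_cost_general (fun _ => eq_zero_of_l1_eq_zero) volume μ hΔ hdp'
  simp only [layerAverage_l1Seminorm] at havg hcost
  exact ⟨fun i hi => ⟨⟨(havg i hi).1.trans measure_univ⟩, (havg i hi).2⟩, hcost⟩
end
end

section
/- For all ε > 0 and Δ > 0, V* = inf_{μ ∈ ⋃_{i≥1} 𝒫_i^{(a)}} V(μ); that is, in minimizing the expected ℓ¹ cost one may restrict to measures whose layer-constant density sequence is monotonically nonincreasing. (Lemma 4.) -/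
open MeasureTheory Real Filter
open scoped ENNReal Topology

noncomputable section

/-- μ has a density w.r.t. Lebesgue measure which is constant on each ℓ¹ layer
A_i(k), with constant value a_k on A_i(k); (a_k) is the density sequence of μ. -/
def HasDensitySeq (Δ : ℝ) (i : ℕ) (μ : Measure (ℝ × ℝ)) (a : ℕ → ℝ≥0∞) : Prop :=
  μ = MeasureTheory.volume.withDensity (fun x => a (layerIdx Δ i x))

/-- Membership in 𝒫: probability measures satisfying the ε-DP constraint. -/
def MemP (ε Δ : ℝ) (μ : Measure (ℝ × ℝ)) : Prop :=
  IsProbabilityMeasure μ ∧ DPC ε Δ μ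

/-- Membership in 𝒫_{i,sym}: members of 𝒫 with layer-constant density. -/
def MemPsym (ε Δ : ℝ) (i : ℕ) (μ : Measure (ℝ × ℝ)) : Prop :=
  MemP ε Δ μ ∧ ∃ a : ℕ → ℝ≥0∞, HasDensitySeq Δ i μ a

/-- Membership in 𝒫_i^{(a)}: layer-constant density with nonincreasing density sequence. -/
def MemPa (ε Δ : ℝ) (i : ℕ) (μ : Measure (ℝ × ℝ)) : Prop :=
  MemP ε Δ μ ∧ ∃ a : ℕ → ℝ≥0∞, HasDensitySeq Δ i μ a ∧ Antitone a

/-- Membership in 𝒫_i^{(b)}: additionally the density sequence decays geometrically,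
a_k = e^ε · a_{k+i} for all k. -/
def MemPb (ε Δ : ℝ) (i : ℕ) (μ : Measure (ℝ × ℝ)) : Prop :=
  MemP ε Δ μ ∧ ∃ a : ℕ → ℝ≥0∞, HasDensitySeq Δ i μ a ∧ Antitone a ∧
    ∀ k : ℕ, a k = ENNReal.ofReal (Real.exp ε) * a (k + i)

/-- Membership in 𝒫_i^{(c)}: additionally a₀ = e^ε · a_{i−1} and
a₀ = a₁ = ⋯ = a_k for some 0 ≤ k ≤ i−2. -/
def MemPc (ε Δ : ℝ) (i : ℕ) (μ : Measure (ℝ × ℝ)) : Prop :=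
  MemP ε Δ μ ∧ ∃ a : ℕ → ℝ≥0∞, HasDensitySeq Δ i μ a ∧ Antitone a ∧
    (∀ k : ℕ, a k = ENNReal.ofReal (Real.exp ε) * a (k + i)) ∧
    a 0 = ENNReal.ofReal (Real.exp ε) * a (i - 1) ∧
    ∃ k : ℕ, k ≤ i - 2 ∧ ∀ j : ℕ, j ≤ k → a j = a 0

/-- Membership in 𝒫_i^{(d)}: members of 𝒫_i^{(c)} whose density sequence takes only
the two values a₀ and a_{i−1} on each period: for some 1 ≤ k ≤ i−2, a_j = a₀ for
0 ≤ j < k and a_j = a_{i−1} for k < j ≤ i−1. -/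
def MemPd (ε Δ : ℝ) (i : ℕ) (μ : Measure (ℝ × ℝ)) : Prop :=
  MemP ε Δ μ ∧ ∃ a : ℕ → ℝ≥0∞, HasDensitySeq Δ i μ a ∧ Antitone a ∧
    (∀ k : ℕ, a k = ENNReal.ofReal (Real.exp ε) * a (k + i)) ∧
    a 0 = ENNReal.ofReal (Real.exp ε) * a (i - 1) ∧
    (∃ k : ℕ, k ≤ i - 2 ∧ ∀ j : ℕ, j ≤ k → a j = a 0) ∧
    ∃ k : ℕ, 1 ≤ k ∧ k ≤ i - 2 ∧ (∀ j : ℕ, j < k → a j = a 0) ∧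
      ∀ j : ℕ, k < j → j ≤ i - 1 → a j = a (i - 1)

/-!
Given `μ` in `𝒫`, cut the plane into squares of side `h = Δ / i` in the coordinates
`(x₁ + x₂, x₁ - x₂)` and spread the mass of `μ` uniformly over each square. The resulting density
`f` costs at most `h` more than `μ`, and the privacy constraint compares its values on squares whose
indices differ by at most `i`. So the set of squares where `f` exceeds `exp (-ε) * l` contains the
sumset of those where `f` exceeds `l` with a box of side `2 * i + 1`, and a discrete Brunn–Minkowski
inequality says: the radius of the ℓ¹ ball with the area of `{l < f}` grows by at least `Δ` when `l`
drops by the factor `exp (-ε)`. Replacing every superlevel set of `f` by the ℓ¹ ball of the same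
area therefore gives a radially decreasing density which loses at most a factor `exp ε` over a
distance `Δ`, and it costs no more than `f` since balls are the cheapest sets of given area.
Rounding the radii down to multiples of `Δ / i ^ 2` makes this density constant on layers. The
rounding removes a fraction of the mass that tends to `0` with `1 / i`, so after normalisation the
cost tends to that of `μ`.
-/

section DiscreteBrunnMinkowski

open scoped Finset Pointwise

variable {G H : Type*} [AddGroup G] [IsAddTorsionFree G] [DecidableEq G] [DecidableEq H]

-- Apply the Cauchy–Davenport bound `#(F + s) ≥ #F + #s - 1` to each fibre `F` of `f` in `A`.
lemma card_add_mul_card_image_le_card_add [AddZeroClass H] (f : G →+ H) (A : Finset G)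
    {s : Finset G} (hs : s.Nonempty) (hf : ∀ x ∈ s, f x = 0) :
    #A + (#s - 1) * #(A.image f) ≤ #(A + s) := by
  have hfiber (y : H) (hy : y ∈ A.image f) :
      #{a ∈ A | f a = y} + (#s - 1) ≤ #{b ∈ A + s | f b = y} := by
    obtain ⟨a, ha, hay⟩ := Finset.mem_image.1 hy
    have hsub : {a ∈ A | f a = y} + s ⊆ {b ∈ A + s | f b = y} := by
      rintro _ hb
      obtain ⟨c, hc, x, hx, rfl⟩ := Finset.mem_add.1 hb
      obtain ⟨hcA, rfl⟩ := Finset.mem_filter.1 hc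
      exact Finset.mem_filter.2 ⟨Finset.add_mem_add hcA hx, by rw [map_add, hf x hx, add_zero]⟩
    have hcd := cauchy_davenport_of_isAddTorsionFree
      (⟨a, Finset.mem_filter.2 ⟨ha, hay⟩⟩ : Finset.Nonempty {a ∈ A | f a = y}) hs
    have := Finset.card_le_card hsub
    have := hs.card_pos
    omega
  have himage : (A + s).image f = A.image f := by
    have hs0 : s.image f = {0} := by
      rw [Finset.image_congr (g := fun _ => (0 : H)) hf, Finset.image_const hs]
    rw [Finset.image_add, hs0, Finset.singleton_zero, add_zero]
  calc #A + (#s - 1) * #(A.image f)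
      = ∑ y ∈ A.image f, (#{a ∈ A | f a = y} + (#s - 1)) := by
        rw [Finset.sum_add_distrib, ← Finset.card_eq_sum_card_image, Finset.sum_const,
          smul_eq_mul, mul_comm]
    _ ≤ ∑ y ∈ A.image f, #{b ∈ A + s | f b = y} := Finset.sum_le_sum hfiber
    _ = #(A + s) := by rw [← himage, ← Finset.card_eq_sum_card_image]

variable [AddGroup H] [IsAddTorsionFree H]

lemma card_add_card_projections_le_card_add_product {A : Finset (G × H)} (hA : A.Nonempty)
    {s : Finset G} {t : Finset H} (hs : s.Nonempty) (ht : t.Nonempty) :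
    #A + (#s - 1) * #(A.image Prod.snd) + (#t - 1) * (#(A.image Prod.fst) + (#s - 1)) ≤
      #(A + s ×ˢ t) := by
  have hrows : #A + (#s - 1) * #(A.image Prod.snd) ≤ #(A + s ×ˢ {0}) := by
    simpa using card_add_mul_card_image_le_card_add (AddMonoidHom.snd G H) A
      (hs.product (Finset.singleton_nonempty 0)) (by simp)
  have hcols : #(A + s ×ˢ {0}) + (#t - 1) * #((A + s ×ˢ {0}).image Prod.fst) ≤
      #(A + s ×ˢ {0} + {0} ×ˢ t) := by
    simpa using card_add_mul_card_image_le_card_add (AddMonoidHom.fst G H) (A + s ×ˢ {0})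
      ((Finset.singleton_nonempty 0).product ht) (by simp)
  have hfst : #(A.image Prod.fst) + (#s - 1) ≤ #((A + s ×ˢ {0}).image Prod.fst) := by
    rw [← AddMonoidHom.coe_fst, Finset.image_add, AddMonoidHom.coe_fst,
      Finset.product_image_fst (Finset.singleton_nonempty 0)]
    have := cauchy_davenport_of_isAddTorsionFree (hA.image Prod.fst) hs
    have := hs.card_pos
    omega
  have hsum : A + s ×ˢ {0} + {0} ×ˢ t = A + s ×ˢ t := by
    rw [add_assoc, Finset.product_add_product_comm, Finset.singleton_zero, Finset.singleton_zero,
      add_zero, zero_add]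
  rw [hsum] at hcols
  have := Nat.mul_le_mul_left (#t - 1) hfst
  omega

lemma sqrt_card_add_sqrt_le_sqrt_card_add_product {A : Finset (G × H)} (hA : A.Nonempty)
    {s : Finset G} {t : Finset H} (hs : s.Nonempty) (ht : t.Nonempty) :
    √(#A : ℝ) + √(((#s - 1) * (#t - 1) : ℕ) : ℝ) ≤ √(#(A + s ×ˢ t) : ℝ) := by
  set r := #(A.image Prod.snd)
  set c := #(A.image Prod.fst)
  have hbox : #A ≤ c * r := by
    rw [← Finset.card_product]
    exact Finset.card_le_card Finset.subset_product
  have hcard := card_add_card_projections_le_card_add_product hA hs ht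
  set m := #s - 1
  set n := #t - 1
  have hcross : 2 * (√(#A : ℝ) * √((m * n : ℕ) : ℝ)) ≤ m * r + n * c := by
    rw [← Real.sqrt_mul (Nat.cast_nonneg _), ← le_div_iff₀' two_pos]
    refine Real.sqrt_le_iff.2 ⟨by positivity, ?_⟩
    calc (#A : ℝ) * (m * n : ℕ) ≤ (c * r : ℕ) * (m * n : ℕ) := by gcongr
      _ = (m * r) * (n * c) := by push_cast; ring
      _ ≤ ((m * r + n * c) / 2) ^ 2 := by nlinarith [sq_nonneg ((m * r : ℝ) - n * c)]
  apply Real.le_sqrt_of_sq_le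
  calc (√(#A : ℝ) + √((m * n : ℕ) : ℝ)) ^ 2
      = #A + 2 * (√(#A : ℝ) * √((m * n : ℕ) : ℝ)) + (m * n : ℕ) := by
        rw [add_sq, Real.sq_sqrt (Nat.cast_nonneg _), Real.sq_sqrt (Nat.cast_nonneg _), mul_assoc]
    _ ≤ #A + (m * r + n * c) + (m * n : ℕ) := by gcongr
    _ = ((#A + m * r + n * (c + m) : ℕ) : ℝ) := by push_cast; ring
    _ ≤ #(A + s ×ˢ t) := Nat.cast_le.2 hcard

end DiscreteBrunnMinkowski

section MeasureTheory

variable {α β : Type*} [MeasurableSpace α] [MeasurableSpace β]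

lemma lintegral_measure_section_comm (μ : Measure α) (ν : Measure β) [SFinite μ] [SFinite ν]
    {T : Set (α × β)} (hT : MeasurableSet T) :
    ∫⁻ x, ν {y | (x, y) ∈ T} ∂μ = ∫⁻ y, μ {x | (x, y) ∈ T} ∂ν :=
  (Measure.prod_apply hT).symm.trans (Measure.prod_apply_symm hT)

lemma setLIntegral_sublevel_le_of_measure_le {μ : Measure α} {φ : α → ℝ≥0∞} (hφ : Measurable φ)
    {r : ℝ≥0∞} {A : Set α} (hA : MeasurableSet A) (hle : μ {x | φ x < r} ≤ μ A)
    (hfin : μ {x | φ x < r} ≠ ⊤) :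
    ∫⁻ x in {x | φ x < r}, φ x ∂μ ≤ ∫⁻ x in A, φ x ∂μ := by
  set B := {x | φ x < r}
  have hB : MeasurableSet B := measurableSet_lt hφ measurable_const
  have hdiff : μ (B \ A) ≤ μ (A \ B) := by
    rw [← measure_inter_add_sdiff B hA, ← measure_inter_add_sdiff A hB, Set.inter_comm A B] at hle
    exact (ENNReal.add_le_add_iff_left
      (measure_ne_top_of_subset Set.inter_subset_left hfin)).1 hle
  rw [← lintegral_inter_add_sdiff φ A hB, ← lintegral_inter_add_sdiff φ B hA, Set.inter_comm A B]
  refine add_le_add_right ?_ _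
  calc ∫⁻ x in B \ A, φ x ∂μ
      ≤ ∫⁻ _ in B \ A, r ∂μ := setLIntegral_mono measurable_const fun x hx => hx.1.le
    _ = r * μ (B \ A) := setLIntegral_const _ _
    _ ≤ r * μ (A \ B) := by gcongr
    _ = ∫⁻ _ in A \ B, r ∂μ := (setLIntegral_const _ _).symm
    _ ≤ ∫⁻ x in A \ B, φ x ∂μ := setLIntegral_mono hφ fun x hx => not_lt.1 hx.2

end MeasureTheory

section TaxicabGeometry

/-- The coordinates `(x₁ + x₂, x₁ - x₂)`, in which the ℓ¹ norm becomes the sup norm. -/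
def diagCoords : (ℝ × ℝ) ≃ₗ[ℝ] ℝ × ℝ where
  toFun x := (x.1 + x.2, x.1 - x.2)
  invFun y := ((y.1 + y.2) / 2, (y.1 - y.2) / 2)
  map_add' x y := by ext <;> simp <;> ring
  map_smul' c x := by ext <;> simp <;> ring
  left_inv x := by ext <;> simp
  right_inv y := by ext <;> simp <;> ring

lemma l1_eq_norm_diagCoords (x : ℝ × ℝ) : l1 x = ‖diagCoords x‖ := by
  change |x.1| + |x.2| = max |x.1 + x.2| |x.1 - x.2|
  grind

lemma l1_diagCoords_symm (y : ℝ × ℝ) : l1 (diagCoords.symm y) = ‖y‖ := by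
  rw [l1_eq_norm_diagCoords, LinearEquiv.apply_symm_apply]

lemma l1_nonneg (x : ℝ × ℝ) : 0 ≤ l1 x := by
  rw [l1_eq_norm_diagCoords]
  exact norm_nonneg _

lemma l1_add_le (x y : ℝ × ℝ) : l1 (x + y) ≤ l1 x + l1 y := by
  simp only [l1_eq_norm_diagCoords, map_add]
  exact norm_add_le _ _

lemma measurable_l1 : Measurable l1 := by
  unfold l1
  fun_prop

lemma measurable_diagCoords : Measurable diagCoords :=
  (LinearMap.continuous_of_finiteDimensional (diagCoords : ℝ × ℝ →ₗ[ℝ] ℝ × ℝ)).measurable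

lemma volume_preimage_diagCoords (s : Set (ℝ × ℝ)) :
    volume (diagCoords ⁻¹' s) = 2⁻¹ * volume s := by
  have hdet : LinearMap.det (diagCoords.symm : ℝ × ℝ →ₗ[ℝ] ℝ × ℝ) = -2⁻¹ := by
    rw [← LinearMap.det_toMatrix (Module.Basis.finTwoProd ℝ), Matrix.det_fin_two]
    simp only [LinearMap.toMatrix_apply, diagCoords]
    norm_num
  rw [Measure.addHaar_preimage_linearEquiv, hdet, abs_neg, abs_of_pos (by positivity),
    ENNReal.ofReal_inv_of_pos two_pos, ENNReal.ofReal_ofNat]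

lemma volume_l1_lt {R : ℝ} (hR : 0 ≤ R) :
    volume {x | l1 x < R} = ENNReal.ofReal (2 * R ^ 2) := by
  have hball : {x | l1 x < R} = diagCoords ⁻¹' Metric.ball (0, 0) R := by
    ext x
    simp only [l1_eq_norm_diagCoords, Set.mem_ofPred_eq, Set.mem_preimage, Prod.mk_zero_zero,
      mem_ball_zero_iff]
  rw [hball, volume_preimage_diagCoords, ← ball_prod_same, Measure.volume_eq_prod,
    Measure.prod_prod, Real.volume_ball, ← ENNReal.ofReal_mul (by positivity),
    ← ENNReal.ofReal_ofNat, ← ENNReal.ofReal_inv_of_pos two_pos,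
    ← ENNReal.ofReal_mul (by positivity)]
  ring_nf

/-- The radius of the ℓ¹ ball with the same area as `A`; it is `0` if `A` has infinite area. -/
def l1Radius (A : Set (ℝ × ℝ)) : ℝ := √(volume.real A / 2)

lemma volume_l1_lt_l1Radius {A : Set (ℝ × ℝ)} (hA : volume A ≠ ⊤) :
    volume {x | l1 x < l1Radius A} = volume A := by
  rw [l1Radius, volume_l1_lt (Real.sqrt_nonneg _),
    Real.sq_sqrt (div_nonneg measureReal_nonneg two_pos.le), mul_div_cancel₀ _ two_ne_zero,
    measureReal_def, ENNReal.ofReal_toReal hA]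

/-- The index of the cell containing `x` in the square grid of side `h` in the coordinates
`diagCoords`; the cells are the fibres of `gridIndex h`. -/
def gridIndex (h : ℝ) (x : ℝ × ℝ) : ℤ × ℤ :=
  (⌊(diagCoords x).1 / h⌋, ⌊(diagCoords x).2 / h⌋)

lemma measurable_gridIndex (h : ℝ) : Measurable (gridIndex h) :=
  (measurable_diagCoords.fst.div_const h).floor.prodMk
    (measurable_diagCoords.snd.div_const h).floor

variable {h : ℝ}

lemma l1_le_l1_add_of_gridIndex_eq (hh : 0 < h) {x y : ℝ × ℝ}
    (hxy : gridIndex h x = gridIndex h y) : l1 x ≤ l1 y + h := by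
  have hcoord {s t : ℝ} (hst : ⌊s / h⌋ = ⌊t / h⌋) : |s - t| ≤ h := by
    have := Int.abs_sub_lt_one_of_floor_eq_floor hst
    rw [← sub_div, abs_div, abs_of_pos hh, div_lt_one hh] at this
    exact this.le
  have hsub : l1 (x - y) ≤ h := by
    rw [l1_eq_norm_diagCoords, map_sub]
    exact max_le (hcoord (congrArg Prod.fst hxy)) (hcoord (congrArg Prod.snd hxy))
  calc l1 x = l1 (y + (x - y)) := by rw [add_sub_cancel]
    _ ≤ l1 y + l1 (x - y) := l1_add_le _ _
    _ ≤ l1 y + h := by gcongr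

lemma gridIndex_add_diagCoords_symm (hh : h ≠ 0) (x : ℝ × ℝ) (d : ℤ × ℤ) :
    gridIndex h (x + diagCoords.symm (h * d.1, h * d.2)) = gridIndex h x + d := by
  simp only [gridIndex, map_add, LinearEquiv.apply_symm_apply, Prod.fst_add, Prod.snd_add, add_div,
    mul_div_cancel_left₀ _ hh, Int.floor_add_intCast]
  rfl

lemma volume_gridIndex_preimage (hh : 0 < h) (P : Set (ℤ × ℤ)) :
    volume (gridIndex h ⁻¹' P) = P.encard * ENNReal.ofReal (h ^ 2 / 2) := by
  have hcell (p : ℤ × ℤ) : volume (gridIndex h ⁻¹' {p}) = ENNReal.ofReal (h ^ 2 / 2) := by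
    have hsquare : gridIndex h ⁻¹' {p} = diagCoords ⁻¹'
        (Set.Ico (p.1 * h) ((p.1 + 1) * h) ×ˢ Set.Ico (p.2 * h) ((p.2 + 1) * h)) := by
      ext x
      simp only [gridIndex, Set.mem_preimage, Set.mem_singleton_iff, Prod.ext_iff,
        Int.floor_eq_iff, Set.mem_prod, Set.mem_Ico, le_div_iff₀ hh, div_lt_iff₀ hh]
    rw [hsquare, volume_preimage_diagCoords, Measure.volume_eq_prod, Measure.prod_prod,
      Real.volume_Ico, Real.volume_Ico, ← ENNReal.ofReal_mul (by nlinarith),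
      ← ENNReal.ofReal_ofNat, ← ENNReal.ofReal_inv_of_pos two_pos,
      ← ENNReal.ofReal_mul (by positivity)]
    ring_nf
  rw [← tsum_measure_preimage_singleton P.to_countable
    fun p _ => measurable_gridIndex h (measurableSet_singleton p)]
  simp_rw [hcell, ENNReal.tsum_set_const]

lemma l1Radius_gridIndex_preimage (hh : 0 < h) (P : Set (ℤ × ℤ)) :
    l1Radius (gridIndex h ⁻¹' P) = h / 2 * √P.ncard := by
  have hcard : (P.encard : ℝ≥0∞).toReal = P.ncard := ENNReal.toReal_enatCard P
  have harea : volume.real (gridIndex h ⁻¹' P) / 2 = (h / 2) ^ 2 * P.ncard := by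
    rw [measureReal_def, volume_gridIndex_preimage hh, ENNReal.toReal_mul,
      ENNReal.toReal_ofReal (by positivity), hcard]
    ring
  rw [l1Radius, harea, Real.sqrt_mul (sq_nonneg _), Real.sqrt_sq (by positivity)]

lemma half_le_l1Radius_gridIndex_preimage (hh : 0 < h) {P : Set (ℤ × ℤ)}
    (hP : 0 < l1Radius (gridIndex h ⁻¹' P)) : h / 2 ≤ l1Radius (gridIndex h ⁻¹' P) := by
  rw [l1Radius_gridIndex_preimage hh] at hP ⊢
  have hcard : P.ncard ≠ 0 := by
    intro h0
    simp [h0] at hP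
  have : 1 ≤ √(P.ncard : ℝ) := Real.one_le_sqrt.2 (mod_cast Nat.one_le_iff_ne_zero.2 hcard)
  exact le_mul_of_one_le_right (by positivity) this

lemma l1Radius_gridIndex_preimage_add_le (hh : 0 < h) {P Q : Set (ℤ × ℤ)} (i : ℕ)
    (hP : 0 < l1Radius (gridIndex h ⁻¹' P)) (hQ : Q.Finite)
    (hPQ : ∀ p ∈ P, ∀ d : ℤ × ℤ, |d.1| ≤ i → |d.2| ≤ i → p + d ∈ Q) :
    l1Radius (gridIndex h ⁻¹' P) + h * i ≤ l1Radius (gridIndex h ⁻¹' Q) := by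
  open scoped Pointwise in
  have hPfin : P.Finite := hQ.subset fun p hp => by simpa using hPQ p hp 0
  lift P to Finset (ℤ × ℤ) using hPfin
  lift Q to Finset (ℤ × ℤ) using hQ
  have hne : P.Nonempty := by
    rw [Finset.nonempty_iff_ne_empty]
    rintro rfl
    simp [l1Radius] at hP
  set s := Finset.Icc (-i : ℤ) i
  have hs : s.card - 1 = 2 * i := by rw [Int.card_Icc]; omega
  have hsne : s.Nonempty := ⟨0, by simp [s]⟩
  have hsub : P + s ×ˢ s ⊆ Q := by
    rintro _ hq
    obtain ⟨p, hp, d, hd, rfl⟩ := Finset.mem_add.1 hq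
    rw [Finset.mem_product, Finset.mem_Icc, Finset.mem_Icc, ← abs_le, ← abs_le] at hd
    exact hPQ p hp d hd.1 hd.2
  have hbm : √(P.card : ℝ) + 2 * i ≤ √(Q.card : ℝ) := by
    calc √(P.card : ℝ) + 2 * i
        = √(P.card : ℝ) + √(((s.card - 1) * (s.card - 1) : ℕ) : ℝ) := by
          rw [hs, Nat.cast_mul, Real.sqrt_mul_self (Nat.cast_nonneg _), Nat.cast_mul,
            Nat.cast_ofNat]
      _ ≤ √((P + s ×ˢ s).card : ℝ) := sqrt_card_add_sqrt_le_sqrt_card_add_product hne hsne hsne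
      _ ≤ √(Q.card : ℝ) := by gcongr
  simp only [l1Radius_gridIndex_preimage hh, Set.ncard_coe_finset]
  linear_combination h / 2 * hbm

end TaxicabGeometry

section CellAveraging

/-- The measure `‖x‖₁ dx`, so that integrating a density against it gives the cost of the
corresponding distribution. -/
def costMeasure : Measure (ℝ × ℝ) := volume.withDensity fun x => ENNReal.ofReal (l1 x)

instance : SFinite costMeasure := inferInstanceAs (SFinite (Measure.withDensity _ _))

lemma cost_withDensity {g : ℝ × ℝ → ℝ≥0∞} (hg : Measurable g) :
    cost (volume.withDensity g) = ∫⁻ x, g x ∂costMeasure := by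
  rw [cost, costMeasure, lintegral_withDensity_eq_lintegral_mul _ hg measurable_l1.ennreal_ofReal,
    lintegral_withDensity_eq_lintegral_mul _ measurable_l1.ennreal_ofReal hg, mul_comm]

/-- The value on the cell with index `p` of the density obtained from `μ` by spreading its mass
uniformly over each cell of the grid; the area of a cell is `h ^ 2 / 2`. -/
def cellDensity (μ : Measure (ℝ × ℝ)) (h : ℝ) (p : ℤ × ℤ) : ℝ :=
  μ.real (gridIndex h ⁻¹' {p}) / (h ^ 2 / 2)

variable {μ : Measure (ℝ × ℝ)} {ε Δ h : ℝ}

lemma cellDensity_nonneg (p : ℤ × ℤ) : 0 ≤ cellDensity μ h p :=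
  div_nonneg measureReal_nonneg (by positivity)

lemma measurable_cellDensity_gridIndex : Measurable fun x => cellDensity μ h (gridIndex h x) :=
  (measurable_of_countable (cellDensity μ h)).comp (measurable_gridIndex h)

lemma lintegral_cellDensity_gridIndex [IsFiniteMeasure μ] (hh : 0 < h) (ν : Measure (ℝ × ℝ))
    [SFinite ν] :
    ∫⁻ x, ENNReal.ofReal (cellDensity μ h (gridIndex h x)) ∂ν =
      ∫⁻ y, ν (gridIndex h ⁻¹' {gridIndex h y}) / ENNReal.ofReal (h ^ 2 / 2) ∂μ := by
  have harea : (0 : ℝ) < h ^ 2 / 2 := by positivity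
  have hinv : (ENNReal.ofReal (h ^ 2 / 2))⁻¹ ≠ ⊤ := by simpa using harea
  have hsame : MeasurableSet {z : (ℝ × ℝ) × (ℝ × ℝ) | gridIndex h z.2 = gridIndex h z.1} :=
    measurableSet_eq_fun ((measurable_gridIndex h).comp measurable_snd)
      ((measurable_gridIndex h).comp measurable_fst)
  have hcomm : ∫⁻ x, μ (gridIndex h ⁻¹' {gridIndex h x}) ∂ν =
      ∫⁻ y, ν (gridIndex h ⁻¹' {gridIndex h y}) ∂μ :=
    (lintegral_measure_section_comm ν μ hsame).trans
      (lintegral_congr fun _ => congrArg ν (Set.ext fun _ => eq_comm))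
  simp only [cellDensity, ENNReal.ofReal_div_of_pos harea,
    ofReal_measureReal (measure_ne_top μ _)]
  simp only [ENNReal.div_eq_inv_mul]
  rw [lintegral_const_mul' _ _ hinv, hcomm, lintegral_const_mul' _ _ hinv]

lemma lintegral_cellDensity_gridIndex_volume [IsFiniteMeasure μ] (hh : 0 < h) :
    ∫⁻ x, ENNReal.ofReal (cellDensity μ h (gridIndex h x)) = μ Set.univ := by
  have harea : ENNReal.ofReal (h ^ 2 / 2) ≠ 0 := (ENNReal.ofReal_pos.2 (by positivity)).ne'
  simp only [lintegral_cellDensity_gridIndex hh, volume_gridIndex_preimage hh, Set.encard_singleton,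
    ENat.toENNReal_one, one_mul, ENNReal.div_self harea ENNReal.ofReal_ne_top, lintegral_one]

lemma lintegral_cellDensity_gridIndex_costMeasure_le [IsFiniteMeasure μ] (hh : 0 < h) :
    ∫⁻ x, ENNReal.ofReal (cellDensity μ h (gridIndex h x)) ∂costMeasure ≤
      cost μ + ENNReal.ofReal h * μ Set.univ := by
  have harea : ENNReal.ofReal (h ^ 2 / 2) ≠ 0 := (ENNReal.ofReal_pos.2 (by positivity)).ne'
  have hcell (y : ℝ × ℝ) : costMeasure (gridIndex h ⁻¹' {gridIndex h y}) ≤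
      ENNReal.ofReal (l1 y + h) * ENNReal.ofReal (h ^ 2 / 2) := by
    rw [costMeasure, withDensity_apply _ (measurable_gridIndex h (measurableSet_singleton _))]
    calc ∫⁻ x in gridIndex h ⁻¹' {gridIndex h y}, ENNReal.ofReal (l1 x)
        ≤ ∫⁻ _ in gridIndex h ⁻¹' {gridIndex h y}, ENNReal.ofReal (l1 y + h) :=
          setLIntegral_mono measurable_const fun x hx =>
            ENNReal.ofReal_le_ofReal (l1_le_l1_add_of_gridIndex_eq hh hx)
      _ = ENNReal.ofReal (l1 y + h) * ENNReal.ofReal (h ^ 2 / 2) := by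
          rw [setLIntegral_const, volume_gridIndex_preimage hh, Set.encard_singleton,
            ENat.toENNReal_one, one_mul]
  calc ∫⁻ x, ENNReal.ofReal (cellDensity μ h (gridIndex h x)) ∂costMeasure
      = ∫⁻ y, costMeasure (gridIndex h ⁻¹' {gridIndex h y}) / ENNReal.ofReal (h ^ 2 / 2) ∂μ :=
        lintegral_cellDensity_gridIndex hh _
    _ ≤ ∫⁻ y, ENNReal.ofReal (l1 y + h) ∂μ := lintegral_mono fun y =>
        (ENNReal.div_le_iff harea ENNReal.ofReal_ne_top).2 (hcell y)
    _ = cost μ + ENNReal.ofReal h * μ Set.univ := by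
        simp only [ENNReal.ofReal_add (l1_nonneg _) hh.le]
        rw [lintegral_add_right _ measurable_const, lintegral_const, cost]

lemma integrable_cellDensity_gridIndex [IsFiniteMeasure μ] (hh : 0 < h) :
    Integrable fun x => cellDensity μ h (gridIndex h x) := by
  refine ⟨measurable_cellDensity_gridIndex.aestronglyMeasurable, ?_⟩
  rw [hasFiniteIntegral_iff_ofReal (ae_of_all _ fun _ => cellDensity_nonneg _),
    lintegral_cellDensity_gridIndex_volume hh]
  exact measure_lt_top μ _

lemma finite_setOf_lt_cellDensity [IsFiniteMeasure μ] (hh : 0 < h) {l : ℝ} (hl : 0 < l) :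
    {p | l < cellDensity μ h p}.Finite := by
  have hvol : volume (gridIndex h ⁻¹' {p | l < cellDensity μ h p}) < ⊤ :=
    (integrable_cellDensity_gridIndex hh).measure_gt_lt_top hl
  by_contra hinf
  rw [volume_gridIndex_preimage hh, Set.encard_eq_top_iff.2 hinf, ENat.toENNReal_top,
    ENNReal.top_mul (ENNReal.ofReal_pos.2 (by positivity)).ne'] at hvol
  exact lt_irrefl _ hvol

lemma DPC.cellDensity_le [IsFiniteMeasure μ] (hμ : DPC ε Δ μ) (hh : h ≠ 0) (p : ℤ × ℤ)
    {d : ℤ × ℤ} (hd₁ : |h * d.1| ≤ Δ) (hd₂ : |h * d.2| ≤ Δ) :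
    cellDensity μ h p ≤ Real.exp ε * cellDensity μ h (p + d) := by
  set t := diagCoords.symm (h * d.1, h * d.2)
  have ht : l1 t ≤ Δ := (l1_diagCoords_symm _).trans_le (max_le hd₁ hd₂)
  have hsub : (· + t) '' (gridIndex h ⁻¹' {p}) ⊆ gridIndex h ⁻¹' {p + d} := by
    rintro _ ⟨x, rfl, rfl⟩
    exact gridIndex_add_diagCoords_symm hh x d
  have hmeasure : μ (gridIndex h ⁻¹' {p}) ≤
      ENNReal.ofReal (Real.exp ε) * μ (gridIndex h ⁻¹' {p + d}) :=
    (hμ _ (measurable_gridIndex h (measurableSet_singleton p)) t ht).trans (by gcongr)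
  have hreal := ENNReal.toReal_mono (by finiteness) hmeasure
  rw [ENNReal.toReal_mul, ENNReal.toReal_ofReal (Real.exp_pos ε).le] at hreal
  rw [cellDensity, cellDensity, ← mul_div_assoc]
  exact div_le_div_of_nonneg_right hreal (by positivity)

lemma DPC.l1Radius_superlevel_add_le [IsFiniteMeasure μ] (hμ : DPC ε Δ μ) (hh : 0 < h) {i : ℕ}
    (hΔ : h * i ≤ Δ) {l : ℝ} (hl : 0 < l)
    (hpos : 0 < l1Radius {x | l < cellDensity μ h (gridIndex h x)}) :
    l1Radius {x | l < cellDensity μ h (gridIndex h x)} + h * i ≤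
      l1Radius {x | (Real.exp ε)⁻¹ * l < cellDensity μ h (gridIndex h x)} := by
  have hshift {k : ℤ} (hk : |k| ≤ i) : |h * k| ≤ Δ := by
    rw [abs_mul, abs_of_pos hh]
    have : |(k : ℝ)| ≤ i := mod_cast hk
    exact le_trans (by gcongr) hΔ
  refine l1Radius_gridIndex_preimage_add_le (P := {p | l < cellDensity μ h p})
    (Q := {p | (Real.exp ε)⁻¹ * l < cellDensity μ h p}) hh i hpos
    (finite_setOf_lt_cellDensity hh (by positivity)) fun p hp d hd₁ hd₂ => ?_
  rw [Set.mem_ofPred_eq, inv_mul_lt_iff₀ (Real.exp_pos ε)]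
  exact lt_of_lt_of_le hp (hμ.cellDensity_le hh.ne' p (hshift hd₁) (hshift hd₂))

end CellAveraging

section Rearrangement

/-- The value at ℓ¹ norm `r` of the decreasing rearrangement of `f` along ℓ¹ balls: each superlevel
set of `f` at a positive level is replaced by the centred ℓ¹ ball of the same area. -/
def rearrangement (f : ℝ × ℝ → ℝ) (r : ℝ) : ℝ≥0∞ :=
  volume.restrict (Set.Ioi 0) {l : ℝ | r < l1Radius {x | l < f x}}

variable {f : ℝ × ℝ → ℝ}

lemma antitone_rearrangement : Antitone (rearrangement f) :=
  fun _ _ hrs => measure_mono fun _ hl => lt_of_le_of_lt hrs hl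

lemma measurable_l1Radius_superlevel : Measurable fun l : ℝ => l1Radius {x | l < f x} := by
  have hanti : Antitone fun l : ℝ => volume {x | l < f x} :=
    fun _ _ hl => measure_mono fun _ hx => lt_of_le_of_lt hl hx
  exact (hanti.measurable.ennreal_toReal.div_const 2).sqrt

lemma lintegral_rearrangement (ν : Measure (ℝ × ℝ)) [SFinite ν] {φ : ℝ × ℝ → ℝ}
    (hφ : Measurable φ) :
    ∫⁻ x, rearrangement f (φ x) ∂ν =
      ∫⁻ l in Set.Ioi 0, ν {x | φ x < l1Radius {y | l < f y}} :=
  lintegral_measure_section_comm ν _ <| measurableSet_lt (hφ.comp measurable_fst)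
    (measurable_l1Radius_superlevel.comp measurable_snd)

lemma lintegral_rearrangement_l1 (hf : Integrable f) (hf₀ : 0 ≤ f) :
    ∫⁻ x, rearrangement f (l1 x) = ∫⁻ x, ENNReal.ofReal (f x) := by
  rw [lintegral_rearrangement _ measurable_l1,
    lintegral_eq_lintegral_meas_lt _ (ae_of_all _ hf₀) hf.aemeasurable]
  exact setLIntegral_congr_fun measurableSet_Ioi fun l hl =>
    volume_l1_lt_l1Radius (hf.measure_gt_lt_top hl).ne

lemma lintegral_rearrangement_l1_costMeasure_le (hf : Integrable f) (hfm : Measurable f)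
    (hf₀ : 0 ≤ f) :
    ∫⁻ x, rearrangement f (l1 x) ∂costMeasure ≤ ∫⁻ x, ENNReal.ofReal (f x) ∂costMeasure := by
  rw [lintegral_rearrangement _ measurable_l1,
    lintegral_eq_lintegral_meas_lt _ (ae_of_all _ hf₀) hfm.aemeasurable]
  refine setLIntegral_mono' measurableSet_Ioi fun l hl => ?_
  set A := {x | l < f x}
  have hA : MeasurableSet A := measurableSet_lt measurable_const hfm
  have hAfin : volume A ≠ ⊤ := (hf.measure_gt_lt_top hl).ne
  have hball : {x | l1 x < l1Radius A} =
      {x | ENNReal.ofReal (l1 x) < ENNReal.ofReal (l1Radius A)} := by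
    ext x
    exact (ENNReal.ofReal_lt_ofReal_iff_of_nonneg (l1_nonneg x)).symm
  have hvol := volume_l1_lt_l1Radius hAfin
  rw [costMeasure, withDensity_apply _ (measurableSet_lt measurable_l1 measurable_const),
    withDensity_apply _ hA, hball]
  rw [hball] at hvol
  exact setLIntegral_sublevel_le_of_measure_le measurable_l1.ennreal_ofReal hA hvol.le
    (hvol.trans_ne hAfin)

lemma le_lintegral_rearrangement_l1_add (hf : Integrable f) (hf₀ : 0 ≤ f) {δ r : ℝ} (hr : 0 < r)
    (hδr : δ ≤ r) (hδ : 0 ≤ δ)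
    (hradius : ∀ l > 0, 0 < l1Radius {x | l < f x} → r ≤ l1Radius {x | l < f x}) :
    ENNReal.ofReal ((1 - δ / r) ^ 2) * ∫⁻ x, ENNReal.ofReal (f x) ≤
      ∫⁻ x, rearrangement f (l1 x + δ) := by
  rw [← lintegral_rearrangement_l1 hf hf₀, lintegral_rearrangement _ measurable_l1,
    lintegral_rearrangement _ (measurable_l1.add_const δ),
    ← lintegral_const_mul' _ _ ENNReal.ofReal_ne_top]
  refine setLIntegral_mono' measurableSet_Ioi fun l hl => ?_
  set R := l1Radius {x | l < f x}
  have hR : 0 ≤ R := Real.sqrt_nonneg _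
  have hscale : 0 ≤ 1 - δ / r := sub_nonneg.2 ((div_le_one hr).2 hδr)
  have hshrink : (1 - δ / r) * R ≤ R - δ ∨ R = 0 := by
    rcases hR.eq_or_lt with h0 | hpos
    · exact Or.inr h0.symm
    · left
      have : δ ≤ δ / r * R := by
        rw [div_mul_eq_mul_div, le_div_iff₀ hr]
        exact mul_le_mul_of_nonneg_left (hradius l hl hpos) hδ
      linarith
  rcases hshrink with hle | h0
  · calc ENNReal.ofReal ((1 - δ / r) ^ 2) * volume {x | l1 x < R}
        = volume {x | l1 x < (1 - δ / r) * R} := by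
          rw [volume_l1_lt hR, volume_l1_lt (mul_nonneg hscale hR),
            ← ENNReal.ofReal_mul (sq_nonneg _)]
          ring_nf
      _ ≤ volume {x | l1 x + δ < R} :=
          measure_mono fun x hx => lt_sub_iff_add_lt.1 (lt_of_lt_of_le hx hle)
  · rw [h0, volume_l1_lt le_rfl]
    simp

lemma rearrangement_le_mul_rearrangement_add {c s r : ℝ} (hc : 0 < c) (hr : 0 ≤ r)
    (hradius : ∀ l > 0, 0 < l1Radius {x | l < f x} →
      l1Radius {x | l < f x} + s ≤ l1Radius {x | c⁻¹ * l < f x}) :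
    rearrangement f r ≤ ENNReal.ofReal c * rearrangement f (r + s) := by
  rw [rearrangement, rearrangement, Measure.restrict_apply' measurableSet_Ioi,
    Measure.restrict_apply' measurableSet_Ioi]
  set T := {l : ℝ | r + s < l1Radius {x | l < f x}} ∩ Set.Ioi 0
  calc volume ({l : ℝ | r < l1Radius {x | l < f x}} ∩ Set.Ioi 0)
      ≤ volume ((fun l => c⁻¹ * l) ⁻¹' T) := by
        refine measure_mono fun l ⟨hrl, hl⟩ => ⟨?_, mul_pos (inv_pos.2 hc) hl⟩
        rw [Set.mem_ofPred_eq] at hrl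
        exact lt_of_lt_of_le (by gcongr) (hradius l hl (hr.trans_lt hrl))
    _ = ENNReal.ofReal c * volume T := by
        rw [Real.volume_preimage_mul_left (inv_ne_zero hc.ne'), inv_inv, abs_of_pos hc]

end Rearrangement

section Layers

variable {ε Δ : ℝ} {n : ℕ}

lemma measurable_layerIdx : Measurable (layerIdx Δ n) :=
  ((measurable_l1.mul_const _).div_const _).nat_floor

lemma l1_lt_succ_layerIdx_mul (hΔ : 0 < Δ) (hn : n ≠ 0) (x : ℝ × ℝ) :
    l1 x < (layerIdx Δ n x + 1) * (Δ / n) := by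
  calc l1 x = l1 x * n / Δ * (Δ / n) := by field_simp
    _ < (layerIdx Δ n x + 1) * (Δ / n) := by
        gcongr
        exact Nat.lt_floor_add_one _

lemma succ_layerIdx_mul_le (hΔ : 0 < Δ) (hn : n ≠ 0) (x : ℝ × ℝ) :
    (layerIdx Δ n x + 1) * (Δ / n) ≤ l1 x + Δ / n := by
  have hl1 := l1_nonneg x
  have hfloor : (layerIdx Δ n x : ℝ) ≤ l1 x * n / Δ := Nat.floor_le (by positivity)
  calc (layerIdx Δ n x + 1) * (Δ / n) ≤ (l1 x * n / Δ + 1) * (Δ / n) := by gcongr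
    _ = l1 x + Δ / n := by field_simp

lemma layerIdx_add_le (hΔ : 0 < Δ) (x : ℝ × ℝ) {t : ℝ × ℝ} (ht : l1 t ≤ Δ) :
    layerIdx Δ n (x + t) ≤ layerIdx Δ n x + n := by
  have hl1 := l1_nonneg x
  calc layerIdx Δ n (x + t) ≤ ⌊l1 x * n / Δ + n⌋₊ := Nat.floor_le_floor <| by
        rw [div_add' _ _ _ hΔ.ne', mul_comm (n : ℝ) Δ, ← add_mul]
        gcongr
        exact (l1_add_le x t).trans (by gcongr)
    _ = layerIdx Δ n x + n := Nat.floor_add_natCast (by positivity) n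

lemma dpc_withDensity_layerIdx (hΔ : 0 < Δ) {a : ℕ → ℝ≥0∞} (ha : Antitone a)
    (hdecay : ∀ k, a k ≤ ENNReal.ofReal (Real.exp ε) * a (k + n)) :
    DPC ε Δ (volume.withDensity fun x => a (layerIdx Δ n x)) := by
  intro S hS t ht
  have htranslate : ∫⁻ x in (· + t) '' S, a (layerIdx Δ n x) =
      ∫⁻ x in S, a (layerIdx Δ n (x + t)) :=
    (measurePreserving_add_right volume t).setLIntegral_comp_emb
      (measurableEmbedding_addRight t) _ S |>.symm
  rw [withDensity_apply _ hS,
    withDensity_apply _ ((measurableEmbedding_addRight t).measurableSet_image.2 hS), htranslate,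
    ← lintegral_const_mul' _ _ ENNReal.ofReal_ne_top]
  refine lintegral_mono fun x => (hdecay _).trans ?_
  gcongr
  exact ha (layerIdx_add_le hΔ x ht)

lemma exists_memPa_cost_eq (hΔ : 0 < Δ) {a : ℕ → ℝ≥0∞} (ha : Antitone a)
    (hdecay : ∀ k, a k ≤ ENNReal.ofReal (Real.exp ε) * a (k + n))
    (h₀ : ∫⁻ x, a (layerIdx Δ n x) ≠ 0) (htop : ∫⁻ x, a (layerIdx Δ n x) ≠ ⊤) :
    ∃ ν, MemPa ε Δ n ν ∧
      cost ν = (∫⁻ x, a (layerIdx Δ n x))⁻¹ * ∫⁻ x, a (layerIdx Δ n x) ∂costMeasure := by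
  set M := ∫⁻ x, a (layerIdx Δ n x)
  have hinv : M⁻¹ ≠ ⊤ := ENNReal.inv_ne_top.2 h₀
  let b : ℕ → ℝ≥0∞ := fun k => M⁻¹ * a k
  have hanti : Antitone b := fun _ _ hk => mul_le_mul_right (ha hk) _
  have hbdecay (k : ℕ) : b k ≤ ENNReal.ofReal (Real.exp ε) * b (k + n) := by
    rw [mul_left_comm]
    exact mul_le_mul_right (hdecay k) _
  have hprob : IsProbabilityMeasure (volume.withDensity fun x => b (layerIdx Δ n x)) := by
    constructor
    rw [withDensity_apply _ MeasurableSet.univ, setLIntegral_univ, lintegral_const_mul' _ _ hinv,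
      ENNReal.inv_mul_cancel h₀ htop]
  refine ⟨volume.withDensity fun x => b (layerIdx Δ n x),
    ⟨⟨hprob, dpc_withDensity_layerIdx hΔ hanti hbdecay⟩, b, rfl, hanti⟩, ?_⟩
  have hmeas : Measurable fun x => b (layerIdx Δ n x) :=
    (measurable_of_countable b).comp measurable_layerIdx
  rw [cost_withDensity hmeas, lintegral_const_mul' _ _ hinv]

/-- The density sequence obtained by sampling the rearrangement of `f` at the outer radius of each
layer `A_n(k)`. -/
def layerSeq (f : ℝ × ℝ → ℝ) (Δ : ℝ) (n k : ℕ) : ℝ≥0∞ :=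
  rearrangement f ((k + 1) * (Δ / n))

variable {f : ℝ × ℝ → ℝ}

lemma antitone_layerSeq (hΔ : 0 < Δ) : Antitone (layerSeq f Δ n) :=
  fun _ _ hk => antitone_rearrangement (by gcongr)

lemma layerSeq_le_mul_layerSeq_add (hΔ : 0 < Δ) (hn : n ≠ 0) {c : ℝ} (hc : 0 < c)
    (hradius : ∀ l > 0, 0 < l1Radius {x | l < f x} →
      l1Radius {x | l < f x} + Δ ≤ l1Radius {x | c⁻¹ * l < f x}) (k : ℕ) :
    layerSeq f Δ n k ≤ ENNReal.ofReal c * layerSeq f Δ n (k + n) := by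
  have hn' : (n : ℝ) ≠ 0 := mod_cast hn
  have hshift : ((k + n : ℕ) + 1 : ℝ) * (Δ / n) = (k + 1) * (Δ / n) + Δ := by
    push_cast
    field_simp
    ring
  rw [layerSeq, layerSeq, hshift]
  exact rearrangement_le_mul_rearrangement_add hc (by positivity) hradius

lemma layerSeq_layerIdx_le (hΔ : 0 < Δ) (hn : n ≠ 0) (x : ℝ × ℝ) :
    layerSeq f Δ n (layerIdx Δ n x) ≤ rearrangement f (l1 x) :=
  antitone_rearrangement (l1_lt_succ_layerIdx_mul hΔ hn x).le

lemma rearrangement_add_le_layerSeq_layerIdx (hΔ : 0 < Δ) (hn : n ≠ 0) (x : ℝ × ℝ) :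
    rearrangement f (l1 x + Δ / n) ≤ layerSeq f Δ n (layerIdx Δ n x) :=
  antitone_rearrangement (succ_layerIdx_mul_le hΔ hn x)

end Layers

section Approximation

variable {μ : Measure (ℝ × ℝ)} {ε Δ : ℝ} {i : ℕ}

lemma exists_memPa_cost_le_of_l1Radius {f : ℝ × ℝ → ℝ} {n : ℕ} {r : ℝ} (hΔ : 0 < Δ) (hn : n ≠ 0)
    (hf : Integrable f) (hfm : Measurable f) (hf₀ : 0 ≤ f) (hmass : ∫⁻ x, ENNReal.ofReal (f x) = 1)
    (hr : Δ / n < r) (hmin : ∀ l > 0, 0 < l1Radius {x | l < f x} → r ≤ l1Radius {x | l < f x})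
    (hgrow : ∀ l > 0, 0 < l1Radius {x | l < f x} →
      l1Radius {x | l < f x} + Δ ≤ l1Radius {x | (Real.exp ε)⁻¹ * l < f x}) :
    ∃ ν, MemPa ε Δ n ν ∧ cost ν ≤
      (ENNReal.ofReal ((1 - Δ / n / r) ^ 2))⁻¹ * ∫⁻ x, ENNReal.ofReal (f x) ∂costMeasure := by
  have hδ : 0 ≤ Δ / n := by positivity
  have hr₀ : 0 < r := hδ.trans_lt hr
  set q := ENNReal.ofReal ((1 - Δ / n / r) ^ 2)
  have hq : q ≠ 0 := by
    have : 0 < 1 - Δ / n / r := sub_pos.2 ((div_lt_one hr₀).2 hr)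
    exact (ENNReal.ofReal_pos.2 (by positivity)).ne'
  set M := ∫⁻ x, layerSeq f Δ n (layerIdx Δ n x)
  have hM_le : M ≤ 1 := calc
    M ≤ ∫⁻ x, rearrangement f (l1 x) := lintegral_mono (layerSeq_layerIdx_le hΔ hn)
    _ = 1 := (lintegral_rearrangement_l1 hf hf₀).trans hmass
  have hle_M : q ≤ M := calc
    q = q * ∫⁻ x, ENNReal.ofReal (f x) := by rw [hmass, mul_one]
    _ ≤ ∫⁻ x, rearrangement f (l1 x + Δ / n) :=
      le_lintegral_rearrangement_l1_add hf hf₀ hr₀ hr.le hδ hmin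
    _ ≤ M := lintegral_mono (rearrangement_add_le_layerSeq_layerIdx hΔ hn)
  obtain ⟨ν, hν, hcost⟩ := exists_memPa_cost_eq hΔ (antitone_layerSeq hΔ)
    (layerSeq_le_mul_layerSeq_add hΔ hn (Real.exp_pos ε) hgrow)
    (ne_bot_of_le_ne_bot hq hle_M) (ne_top_of_le_ne_top ENNReal.one_ne_top hM_le)
  refine ⟨ν, hν, hcost.trans_le (mul_le_mul' (ENNReal.inv_le_inv.2 hle_M) ?_)⟩
  calc ∫⁻ x, layerSeq f Δ n (layerIdx Δ n x) ∂costMeasure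
      ≤ ∫⁻ x, rearrangement f (l1 x) ∂costMeasure := lintegral_mono (layerSeq_layerIdx_le hΔ hn)
    _ ≤ ∫⁻ x, ENNReal.ofReal (f x) ∂costMeasure :=
        lintegral_rearrangement_l1_costMeasure_le hf hfm hf₀

-- The nonempty superlevel sets of the averaged density have ℓ¹ radius at least `Δ / (2 * i)`, which
-- dwarfs the layer width `Δ / i ^ 2`: hence the mass lost to rounding tends to `0`.
lemma exists_memPa_cost_le (hΔ : 0 < Δ) (hμ : MemP ε Δ μ) (hi : 2 < i) :
    ∃ ν, MemPa ε Δ (i ^ 2) ν ∧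
      cost ν ≤ (ENNReal.ofReal ((1 - 2 / i) ^ 2))⁻¹ * (cost μ + ENNReal.ofReal (Δ / i)) := by
  obtain ⟨hprob, hdp⟩ := hμ
  have hi' : (2 : ℝ) < i := mod_cast hi
  have hi₀ : (0 : ℝ) < i := two_pos.trans hi'
  set h := Δ / i
  have hh : 0 < h := div_pos hΔ hi₀
  have hhi : h * i = Δ := div_mul_cancel₀ Δ hi₀.ne'
  have hratio : Δ / (i ^ 2 : ℕ) / (h / 2) = 2 / i := by
    rw [← hhi]
    push_cast
    field_simp
  have hwidth : Δ / (i ^ 2 : ℕ) < h / 2 := by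
    rw [← div_lt_one (half_pos hh), hratio]
    exact (div_lt_one hi₀).2 hi'
  obtain ⟨ν, hν, hcost⟩ := exists_memPa_cost_le_of_l1Radius (ε := ε) hΔ (by positivity)
    (integrable_cellDensity_gridIndex hh) measurable_cellDensity_gridIndex
    (fun _ => cellDensity_nonneg _)
    ((lintegral_cellDensity_gridIndex_volume hh).trans (measure_univ (μ := μ))) hwidth
    (fun l _ => half_le_l1Radius_gridIndex_preimage hh (P := {p | l < cellDensity μ h p}))
    fun l hl hpos => by
      simpa only [hhi] using hdp.l1Radius_superlevel_add_le hh hhi.le hl hpos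
  rw [hratio] at hcost
  refine ⟨ν, hν, hcost.trans ?_⟩
  gcongr
  simpa only [measure_univ, mul_one] using
    lintegral_cellDensity_gridIndex_costMeasure_le (μ := μ) hh

lemma tendsto_inv_ofReal_one_sub_sq_mul_add (c : ℝ≥0∞) (Δ : ℝ) :
    Tendsto (fun i : ℕ => (ENNReal.ofReal ((1 - 2 / i) ^ 2))⁻¹ * (c + ENNReal.ofReal (Δ / i)))
      atTop (𝓝 c) := by
  have hfactor : Tendsto (fun i : ℕ => (ENNReal.ofReal ((1 - 2 / i) ^ 2))⁻¹) atTop (𝓝 1) := by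
    have := ((tendsto_const_div_atTop_nhds_zero_nat (2 : ℝ)).const_sub 1).pow 2
    simpa using tendsto_inv_iff.2 (ENNReal.tendsto_ofReal this)
  have hsum : Tendsto (fun i : ℕ => c + ENNReal.ofReal (Δ / i)) atTop (𝓝 c) := by
    simpa using (ENNReal.tendsto_ofReal (tendsto_const_div_atTop_nhds_zero_nat Δ)).const_add c
  simpa using ENNReal.Tendsto.mul hfactor (Or.inl one_ne_zero) hsum (Or.inr ENNReal.one_ne_top)

end Approximation

/-- Lemma 4: the optimal cost V* equals the infimum over measures with
layer-constant, monotonically nonincreasing density sequences. -/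
theorem Vstar_eq_inf_Pa (ε Δ : ℝ) (hε : 0 < ε) (hΔ : 0 < Δ) :
    (⨅ (μ : Measure (ℝ × ℝ)) (_ : MemP ε Δ μ), cost μ) =
    ⨅ (μ : Measure (ℝ × ℝ)) (_ : ∃ i : ℕ, 1 ≤ i ∧ MemPa ε Δ i μ), cost μ := by
  apply le_antisymm
  · exact le_iInf₂ fun μ ⟨i, _, hμ⟩ => iInf₂_le μ hμ.1
  · refine le_iInf₂ fun μ hμ =>
      ge_of_tendsto (tendsto_inv_ofReal_one_sub_sq_mul_add (cost μ) Δ) ?_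
    filter_upwards [eventually_gt_atTop 2] with i hi
    obtain ⟨ν, hν, hcost⟩ := exists_memPa_cost_le hΔ hμ hi
    exact (iInf₂_le ν ⟨i ^ 2, Nat.one_le_pow _ _ (by lia), hν⟩).trans hcost
end
end
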